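/- arXiv:1906.12250 — 7 statements merged into one kernel-verified Lean document; each statement's English description precedes it below -/
import Mathlib

section
/- Low-rank approximation lemma, part (i). Let F_μ = B_μᵀ ⊗ B_μ^*, where ⊗ is the Kronecker product and B_μ^* the conjugate transpose of B_μ (so that vec(B_μ^* X B_μ) = F_μ vec(X) for all X ∈ ℂ^{M×M}). Then there exist μ₀ > 0 and C > 0 such that for all μ ∈ (0, μ₀): ρ(F_μ) < 1, the matrix I_{M²} − F_μ is invertible, and ‖(I_{M²} − F_μ)^{-1}‖ ≤ C/μ. -/
/-!
Write `p = UUᴴ`, `N = A - p` and `B = A(1 - μH)`. Since `A` commutes with `p` and is the identity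
on its range, `B` acts on the `p`-part of a vector as the compression of `1 - μH`, and on the
complementary part as the stable operator `N`, up to couplings of size `O(μ)`.

* The compression contracts by `1 - μν/2` for small `μ`, because `UᴴHU ≥ ν`
  (`compression_contracts`).
* Gelfand's formula gives `‖N ^ m‖ ≤ r ^ m` for some `m ≥ 1`, `r < 1` (`exists_norm_pow_le`), so
  there is a gauge `n`, equivalent to the norm, with `n (N x) ≤ r n x` (`exists_adapted_gauge`).
* For a suitable weight `t`, independent of `μ`, the Lyapunov functional
  `V x = ‖p x‖ + t n (x - p x)` satisfies `V (B x) ≤ (1 - μν/4) V x` for all small `μ`: the weight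
  absorbs the coupling into the complement, and the gap `1 - r` absorbs the other terms.
  Hence `‖B ^ k‖ ≤ K (1 - cμ) ^ k` with `K`, `c` independent of `μ` (`exists_uniform_decay`).

As `(Bᵀ ⊗ Bᴴ) ^ k = (B ^ k)ᵀ ⊗ (B ^ k)ᴴ`, the powers of `F = Bᵀ ⊗ Bᴴ` decay geometrically as well.
This gives `ρ(F) < 1`, and the Neumann series bounds `(1 - F)⁻¹` by a constant times
`1 / (1 - (1 - cμ)) = 1 / (cμ)` (`neumann_of_pow_le`).
-/

open Matrix
open scoped ComplexOrder Kronecker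

/-- The spectral (operator `ℓ²`-) norm of a complex square matrix. -/
noncomputable def cSpecNorm {n : Type*} [Fintype n] [DecidableEq n]
    (X : Matrix n n ℂ) : ℝ :=
  ‖Matrix.toEuclideanCLM (𝕜 := ℂ) X‖

/-! ### Spectral radius and geometric decay in Banach algebras -/

/-- A functional contracted by an operator with `‖N ^ m‖ ≤ r ^ m`:
`n x = ∑_{k < m} r⁻ᵏ ‖Nᵏ x‖` is equivalent to the norm and satisfies `n (N x) ≤ r n x`. -/
lemma exists_adapted_gauge {E : Type*} [NormedAddCommGroup E] [NormedSpace ℂ E]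
    (N : E →L[ℂ] E) {r : ℝ} (hr : 0 < r) {m : ℕ} (hm : 0 < m) (hN : ‖N ^ m‖ ≤ r ^ m) :
    ∃ (n : E → ℝ) (K : ℝ), 0 < K ∧ (∀ x y, n (x + y) ≤ n x + n y) ∧ (∀ x, ‖x‖ ≤ n x) ∧
      (∀ x, n x ≤ K * ‖x‖) ∧ ∀ x, n (N x) ≤ r * n x := by
  refine ⟨fun x => ∑ k ∈ Finset.range m, (r ^ k)⁻¹ * ‖(N ^ k) x‖,
    1 + ∑ k ∈ Finset.range m, (r ^ k)⁻¹ * ‖N ^ k‖, by positivity, ?_, ?_, ?_, ?_⟩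
  · intro x y
    rw [← Finset.sum_add_distrib]
    refine Finset.sum_le_sum fun k _ => ?_
    rw [← mul_add, map_add]
    gcongr
    exact norm_add_le _ _
  · intro x
    have := Finset.single_le_sum (f := fun k => (r ^ k)⁻¹ * ‖(N ^ k) x‖) (s := Finset.range m)
      (fun i _ => by positivity) (Finset.mem_range.2 hm)
    simpa using this
  · intro x
    rw [add_mul, Finset.sum_mul]
    have : ∑ k ∈ Finset.range m, (r ^ k)⁻¹ * ‖(N ^ k) x‖
        ≤ ∑ k ∈ Finset.range m, (r ^ k)⁻¹ * ‖N ^ k‖ * ‖x‖ := by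
      refine Finset.sum_le_sum fun k _ => ?_
      rw [mul_assoc]
      gcongr
      exact (N ^ k).le_opNorm x
    have h0 := norm_nonneg x
    linarith
  · intro x
    -- Shifting the index turns `n (N x)` into `r` times the sum over `1 ≤ k ≤ m`.
    have h1 : ∑ k ∈ Finset.range m, (r ^ k)⁻¹ * ‖(N ^ k) (N x)‖
        = r * ∑ k ∈ Finset.range m, (r ^ (k + 1))⁻¹ * ‖(N ^ (k + 1)) x‖ := by
      rw [Finset.mul_sum]
      refine Finset.sum_congr rfl fun k _ => ?_
      have : (N ^ (k + 1)) x = (N ^ k) (N x) := by rw [pow_succ]; rfl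
      rw [this, pow_succ]
      field_simp
    have h2 := Finset.sum_range_succ (fun k => (r ^ k)⁻¹ * ‖(N ^ k) x‖) m
    rw [Finset.sum_range_succ'] at h2
    have h3 : (r ^ m)⁻¹ * ‖(N ^ m) x‖ ≤ ‖x‖ := by
      rw [inv_mul_le_iff₀ (by positivity)]
      exact ((N ^ m).le_opNorm x).trans (by gcongr)
    simp only [pow_zero, inv_one, one_mul, one_apply_eq_self] at h2
    show ∑ k ∈ Finset.range m, (r ^ k)⁻¹ * ‖(N ^ k) (N x)‖ ≤ _
    rw [h1]
    gcongr _ * ?_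
    linarith

/-- Gelfand's formula: a spectral radius below one yields a power with `‖N ^ m‖ ≤ r ^ m`. -/
lemma exists_norm_pow_le {R : Type*} [NormedRing R] [NormedAlgebra ℂ R] [CompleteSpace R]
    (N : R) (h : spectralRadius ℂ N < 1) :
    ∃ r : ℝ, 0 < r ∧ r < 1 ∧ ∃ m : ℕ, 0 < m ∧ ‖N ^ m‖ ≤ r ^ m := by
  obtain ⟨r, h1, h2⟩ := ENNReal.lt_iff_exists_nnreal_btwn.1 h
  have hlim := spectrum.pow_nnnorm_pow_one_div_tendsto_nhds_spectralRadius N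
  obtain ⟨m, hm, hm0⟩ :=
    ((hlim.eventually_lt_const h1).and (Filter.eventually_gt_atTop 0)).exists
  have hr1 : r < 1 := by exact_mod_cast h2
  refine ⟨r, ?_, by exact_mod_cast hr1, m, hm0, ?_⟩
  · have : 0 < r := by exact_mod_cast (zero_le.trans_lt h1)
    exact_mod_cast this
  · have := ENNReal.rpow_le_rpow hm.le (Nat.cast_nonneg m)
    rw [← ENNReal.rpow_mul, one_div, inv_mul_cancel₀ (by positivity), ENNReal.rpow_one,
      ENNReal.rpow_natCast] at this
    exact_mod_cast this

/-- Geometric decay of the powers of `F` gives `ρ(F) < 1` and the Neumann-series bound. -/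
lemma neumann_of_pow_le {R : Type*} [NormedRing R] [NormedAlgebra ℂ R] [CompleteSpace R]
    (F : R) {K q : ℝ} (hq0 : 0 ≤ q) (hq1 : q < 1) (hF : ∀ k : ℕ, ‖F ^ k‖ ≤ K * q ^ k) :
    spectralRadius ℂ F < 1 ∧ IsUnit (1 - F) ∧ ‖Ring.inverse (1 - F)‖ ≤ K / (1 - q) := by
  have hgeo : HasSum (fun k : ℕ => K * q ^ k) (K / (1 - q)) := by
    rw [div_eq_mul_inv]
    exact (hasSum_geometric_of_lt_one hq0 hq1).mul_left K
  have hs : Summable (F ^ ·) := Summable.of_norm_bounded hgeo.summable hF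
  let u : Rˣ := ⟨1 - F, ∑' k : ℕ, F ^ k, hs.one_sub_mul_tsum_pow, hs.tsum_pow_mul_one_sub⟩
  have hu : (u : R) = 1 - F := rfl
  refine ⟨?_, ⟨u, hu⟩, ?_⟩
  · rcases (spectrum ℂ F).eq_empty_or_nonempty with he | hne
    · simp [spectralRadius, he]
    · obtain ⟨z, hz, hzr⟩ := spectrum.exists_nnnorm_eq_spectralRadius_of_nonempty hne
      rw [← hzr]
      have hz' : ∀ k : ℕ, ‖z‖ ^ k ≤ K * q ^ k * ‖(1 : R)‖ := fun k => by
        rw [← norm_pow]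
        exact (spectrum.norm_le_norm_mul_of_mem (spectrum.pow_mem_pow F k hz)).trans
          (by gcongr; exact hF k)
      have : ‖z‖ < 1 := by
        by_contra! hcon
        have ht : Filter.Tendsto (fun k : ℕ => K * q ^ k * ‖(1 : R)‖) Filter.atTop (nhds 0) := by
          simpa using ((tendsto_pow_atTop_nhds_zero_of_lt_one hq0 hq1).const_mul K).mul_const
            ‖(1 : R)‖
        obtain ⟨k, hk⟩ := (ht.eventually_lt_const one_pos).exists
        linarith [hz' k, one_le_pow₀ hcon (n := k)]
      exact_mod_cast this
  · rw [← hu, Ring.inverse_unit]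
    exact tsum_of_norm_bounded hgeo hF

/-! ### Uniform decay of the powers of `A(1 - μH)` -/

section Decay

variable {E : Type*} [NormedAddCommGroup E] [InnerProductSpace ℂ E]

/-- On the range of `p`, the compression of `1 - μ h` contracts by `1 - μ ν / 2`: expanding the
squared norm of `p x - μ p h p x`, the cross term gains `2 μ ν` and the quadratic term costs at most
`μ ν`. -/
lemma compression_contracts (p h : E →L[ℂ] E) (hpp : p * p = p)
    (hsymm : ∀ x y, inner ℂ (p x) y = inner ℂ x (p y)) {ν : ℝ}
    (hpos : ∀ x, ν * ‖p x‖ ^ 2 ≤ RCLike.re (inner ℂ (p x) (h (p x)))) {μ : ℝ} (hμ : 0 < μ)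
    (hμ1 : μ * ν ≤ 1) (hμ2 : μ * ‖p * h‖ ^ 2 ≤ ν) (x : E) :
    ‖p x - (μ : ℂ) • p (h (p x))‖ ≤ (1 - μ * (ν / 2)) * ‖p x‖ := by
  have hpx : p (p x) = p x := by rw [← mul_apply_eq_comp, hpp]
  have hin : inner ℂ (p x) (p (h (p x))) = inner ℂ (p x) (h (p x)) := by
    rw [← hsymm, hpx]
  have hb : ‖p (h (p x))‖ ≤ ‖p * h‖ * ‖p x‖ := (p * h).le_opNorm (p x)
  have hb2 : ‖p (h (p x))‖ ^ 2 ≤ ‖p * h‖ ^ 2 * ‖p x‖ ^ 2 := by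
    rw [← mul_pow]; gcongr
  refine le_of_sq_le_sq ?_ (mul_nonneg (by linarith) (norm_nonneg _))
  rw [norm_sub_sq (𝕜 := ℂ), inner_smul_right, hin, norm_smul, Complex.norm_real,
    Real.norm_of_nonneg hμ.le]
  have hre : RCLike.re ((μ : ℂ) * inner ℂ (p x) (h (p x)))
      = μ * RCLike.re (inner ℂ (p x) (h (p x))) := by simp
  rw [hre]
  have h1 := mul_le_mul_of_nonneg_left (hpos x) hμ.le
  have h2 := mul_le_mul_of_nonneg_left hb2 (sq_nonneg μ)
  have h3 := mul_le_mul_of_nonneg_left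
    (mul_le_mul_of_nonneg_right hμ2 (sq_nonneg ‖p x‖)) hμ.le
  nlinarith [sq_nonneg (μ * (ν / 2) * ‖p x‖)]

/-- The powers of `a (1 - μ h)` decay like `(1 - c μ) ^ k`, with a prefactor independent of `μ`. -/
lemma exists_uniform_decay (a p h : E →L[ℂ] E) (hpp : p * p = p)
    (hap : a * p = p) (hpa : p * a = p)
    (hsymm : ∀ x y, inner ℂ (p x) y = inner ℂ x (p y)) {ν : ℝ} (hν : 0 < ν)
    (hpos : ∀ x, ν * ‖p x‖ ^ 2 ≤ RCLike.re (inner ℂ (p x) (h (p x))))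
    {r : ℝ} (hr : 0 < r) (hr1 : r < 1) {m : ℕ} (hm : 0 < m) (hN : ‖(a - p) ^ m‖ ≤ r ^ m) :
    ∃ μ₀ > 0, ∃ c > 0, ∃ K > 0, ∀ μ : ℝ, 0 < μ → μ < μ₀ → c * μ < 1 ∧
      ∀ k : ℕ, ‖(a * (1 - (μ : ℂ) • h)) ^ k‖ ≤ K * (1 - c * μ) ^ k := by
  obtain ⟨n, K, hK, nadd, nlow, nup, nN⟩ := exists_adapted_gauge (a - p) hr hm hN
  set L : ℝ := ‖p * h‖ + ‖(a - p) * h‖ + 1 with hL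
  have hL0 : 0 < L := by positivity
  have hL1 : ‖p * h‖ ≤ L := by have := norm_nonneg ((a - p) * h); linarith
  have hL2 : ‖(a - p) * h‖ ≤ L := by have := norm_nonneg (p * h); linarith
  -- The weight `t` makes the feedback of the `p`-part through `n` cost only `μ ν / 4`.
  obtain ⟨t, ht, htK⟩ : ∃ t : ℝ, 0 < t ∧ t * K * L = ν / 4 :=
    ⟨ν / (4 * K * L), by positivity, by field_simp⟩
  have hS : 0 < L + t * K * L + t * (ν / 4) := by positivity
  refine ⟨min (t * (1 - r) / (L + t * K * L + t * (ν / 4))) (min (1 / ν) (ν / L ^ 2)),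
    lt_min (div_pos (mul_pos ht (by linarith)) hS) (lt_min (by positivity) (by positivity)),
    ν / 4, by positivity, (1 + 1 / t) * (‖p‖ + t * K * (1 + ‖p‖) + 1), by positivity, ?_⟩
  intro μ hμ hlt
  obtain ⟨hA, hB, hC⟩ : μ * (L + t * K * L + t * (ν / 4)) < t * (1 - r) ∧ μ * ν < 1 ∧
      μ * L ^ 2 < ν := by
    simp only [lt_min_iff] at hlt
    refine ⟨(lt_div_iff₀ hS).1 hlt.1, (lt_div_iff₀ hν).1 hlt.2.1,
      (lt_div_iff₀ (by positivity)).1 hlt.2.2⟩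
  have hq : 0 ≤ 1 - ν / 4 * μ := by nlinarith
  refine ⟨by nlinarith, ?_⟩
  set b : E →L[ℂ] E := a * (1 - (μ : ℂ) • h) with hb
  have hap' : ∀ x, a (p x) = p x := fun x => by rw [← mul_apply_eq_comp, hap]
  have hpa' : ∀ x, p (a x) = p x := fun x => by rw [← mul_apply_eq_comp, hpa]
  have hpp' : ∀ x, p (p x) = p x := fun x => by rw [← mul_apply_eq_comp, hpp]
  have hbx : ∀ x, b x = a (x - (μ : ℂ) • h x) := fun x => rfl
  let V : E → ℝ := fun x => ‖p x‖ + t * n (x - p x)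
  have hV : ∀ x, V (b x) ≤ (1 - ν / 4 * μ) * V x := by
    intro x
    have e1 : p (b x) = (p x - (μ : ℂ) • p (h (p x))) - (μ : ℂ) • (p * h) (x - p x) := by
      rw [hbx, hpa']
      simp only [map_sub, map_smul, mul_apply_eq_comp, smul_sub]
      abel
    have e2 : b x - p (b x) = (a - p) (x - p x) + (-(μ : ℂ)) • ((a - p) * h) x := by
      rw [hbx, hpa']
      simp only [map_sub, map_smul, mul_apply_eq_comp, _root_.sub_apply,
        hap', hpp', smul_sub, neg_smul]
      abel
    have hq0 := nlow (x - p x)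
    have f1 : ‖p (b x)‖ ≤ (1 - μ * (ν / 2)) * ‖p x‖ + μ * (L * n (x - p x)) := by
      rw [e1]
      refine (norm_sub_le _ _).trans (add_le_add ?_ ?_)
      · exact compression_contracts p h hpp hsymm hpos hμ hB.le
          (le_trans (by gcongr) hC.le) x
      · rw [norm_smul, Complex.norm_real, Real.norm_of_nonneg hμ.le]
        gcongr
        exact ((p * h).le_opNorm _).trans (by gcongr)
    have f2 : n (b x - p (b x)) ≤ r * n (x - p x) + K * (μ * (L * (‖p x‖ + n (x - p x)))) := by
      rw [e2]
      refine (nadd _ _).trans (add_le_add (nN _) ((nup _).trans ?_))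
      rw [norm_smul, norm_neg, Complex.norm_real, Real.norm_of_nonneg hμ.le]
      gcongr
      refine (((a - p) * h).le_opNorm _).trans ?_
      gcongr
      calc ‖x‖ = ‖p x + (x - p x)‖ := by congr 1; abel
        _ ≤ ‖p x‖ + ‖x - p x‖ := norm_add_le _ _
        _ ≤ _ := by gcongr
    have hn0 : 0 ≤ n (x - p x) := (norm_nonneg _).trans hq0
    have f3 := mul_le_mul_of_nonneg_left f2 ht.le
    have f4 := mul_le_mul_of_nonneg_right hA.le hn0
    have f5 : t * (K * (μ * (L * (‖p x‖ + n (x - p x)))))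
        = μ * (ν / 4) * ‖p x‖ + μ * (t * K * L) * n (x - p x) := by
      rw [← htK]; ring
    show ‖p (b x)‖ + t * n (b x - p (b x)) ≤ (1 - ν / 4 * μ) * (‖p x‖ + t * n (x - p x))
    rw [mul_add t, f5] at f3
    linarith
  have hVk : ∀ (k : ℕ) x, V ((b ^ k) x) ≤ (1 - ν / 4 * μ) ^ k * V x := by
    intro k
    induction k with
    | zero => intro x; simp
    | succ k ih =>
      intro x
      have : (b ^ (k + 1)) x = b ((b ^ k) x) := by rw [pow_succ']; rfl
      rw [this, pow_succ', mul_assoc]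
      exact (hV _).trans (by gcongr; exact ih x)
  have hlow : ∀ x, ‖x‖ ≤ (1 + 1 / t) * V x := by
    intro x
    have h1 : ‖x‖ ≤ ‖p x‖ + ‖x - p x‖ := by
      calc ‖x‖ = ‖p x + (x - p x)‖ := by congr 1; abel
        _ ≤ _ := norm_add_le _ _
    have h2 := nlow (x - p x)
    have h3 : 0 ≤ n (x - p x) := (norm_nonneg _).trans h2
    have h4 : (1 + 1 / t) * V x
        = ‖p x‖ + n (x - p x) + (1 / t * ‖p x‖ + t * n (x - p x)) := by
      show (1 + 1 / t) * (‖p x‖ + t * n (x - p x)) = _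
      field_simp
      ring
    have : 0 ≤ 1 / t * ‖p x‖ + t * n (x - p x) := by positivity
    linarith
  have hup : ∀ x, V x ≤ (‖p‖ + t * K * (1 + ‖p‖) + 1) * ‖x‖ := by
    intro x
    have h1 := p.le_opNorm x
    have h2 : ‖x - p x‖ ≤ (1 + ‖p‖) * ‖x‖ := (norm_sub_le _ _).trans (by linarith)
    have h3 := (nup (x - p x)).trans (mul_le_mul_of_nonneg_left h2 hK.le)
    have h4 := mul_le_mul_of_nonneg_left h3 ht.le
    have h5 := norm_nonneg x
    show ‖p x‖ + t * n (x - p x) ≤ _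
    linarith
  intro k
  refine ContinuousLinearMap.opNorm_le_bound _ (by positivity) fun x => ?_
  calc ‖(b ^ k) x‖ ≤ (1 + 1 / t) * V ((b ^ k) x) := hlow _
    _ ≤ (1 + 1 / t) * ((1 - ν / 4 * μ) ^ k * ((‖p‖ + t * K * (1 + ‖p‖) + 1) * ‖x‖)) := by
      gcongr
      exact (hVk k x).trans (by gcongr; exact hup x)
    _ = _ := by ring

end Decay

/-! ### Passage to the Kronecker product -/

lemma exists_norm_linearMap_le {E F : Type*} [NormedAddCommGroup E] [NormedSpace ℂ E]
    [FiniteDimensional ℂ E] [NormedAddCommGroup F] [NormedSpace ℂ F] (f : E →ₗ[ℂ] F) :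
    ∃ C > 0, ∀ x, ‖f x‖ ≤ C * ‖x‖ :=
  (LinearMap.toContinuousLinearMap f).bound

section Kronecker

open scoped Matrix.Norms.L2Operator

lemma transpose_kronecker_conjTranspose_pow {M : ℕ} (B : Matrix (Fin M) (Fin M) ℂ) (k : ℕ) :
    (Bᵀ ⊗ₖ Bᴴ) ^ k = (B ^ k)ᵀ ⊗ₖ (B ^ k)ᴴ := by
  induction k with
  | zero => simp
  | succ k ih =>
    rw [pow_succ, ih, ← mul_kronecker_mul, ← transpose_mul, ← conjTranspose_mul, ← pow_succ']

/-- `Bᵀ ⊗ Bᴴ = (Bᵀ ⊗ 1)(1 ⊗ Bᴴ)`, and both factors are images of `B`, respectively `Bᴴ`, under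
linear maps between finite-dimensional spaces, which are bounded. -/
lemma exists_norm_kronecker_le (M : ℕ) : ∃ C > 0, ∀ B : Matrix (Fin M) (Fin M) ℂ,
    ‖Bᵀ ⊗ₖ Bᴴ‖ ≤ C * ‖B‖ ^ 2 := by
  let f : Matrix (Fin M) (Fin M) ℂ →ₗ[ℂ] Matrix (Fin M × Fin M) (Fin M × Fin M) ℂ :=
    { toFun := fun B => Bᵀ ⊗ₖ (1 : Matrix (Fin M) (Fin M) ℂ)
      map_add' := fun X Y => by rw [transpose_add, add_kronecker]
      map_smul' := fun c X => by rw [transpose_smul, smul_kronecker]; rfl }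
  let g : Matrix (Fin M) (Fin M) ℂ →ₗ[ℂ] Matrix (Fin M × Fin M) (Fin M × Fin M) ℂ :=
    { toFun := fun B => (1 : Matrix (Fin M) (Fin M) ℂ) ⊗ₖ B
      map_add' := fun X Y => by rw [kronecker_add]
      map_smul' := fun c X => by rw [kronecker_smul]; rfl }
  obtain ⟨a, ha, hfa⟩ := exists_norm_linearMap_le f
  obtain ⟨b, hb, hgb⟩ := exists_norm_linearMap_le g
  refine ⟨a * b, by positivity, fun B => ?_⟩
  have hfg : Bᵀ ⊗ₖ Bᴴ = f B * g Bᴴ := by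
    show _ = (Bᵀ ⊗ₖ (1 : Matrix (Fin M) (Fin M) ℂ)) * ((1 : Matrix (Fin M) (Fin M) ℂ) ⊗ₖ Bᴴ)
    rw [← mul_kronecker_mul, mul_one, one_mul]
  rw [hfg]
  calc ‖f B * g Bᴴ‖ ≤ ‖f B‖ * ‖g Bᴴ‖ := norm_mul_le _ _
    _ ≤ (a * ‖B‖) * (b * ‖Bᴴ‖) :=
      mul_le_mul (hfa B) (hgb Bᴴ) (norm_nonneg _) (by positivity)
    _ = a * b * ‖B‖ ^ 2 := by rw [l2_opNorm_conjTranspose]; ring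

/-- Geometric decay of the powers of `B` transfers to `Bᵀ ⊗ Bᴴ`, and hence gives the bound on the
inverse of `1 - Bᵀ ⊗ Bᴴ`. -/
lemma resolvent_kronecker {M : ℕ} {C : ℝ} (hC : 0 < C)
    (hCB : ∀ B : Matrix (Fin M) (Fin M) ℂ, ‖Bᵀ ⊗ₖ Bᴴ‖ ≤ C * ‖B‖ ^ 2)
    (B : Matrix (Fin M) (Fin M) ℂ) {K q : ℝ} (hq0 : 0 ≤ q) (hq1 : q < 1)
    (hB : ∀ k : ℕ, ‖B ^ k‖ ≤ K * q ^ k) :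
    spectralRadius ℂ (Bᵀ ⊗ₖ Bᴴ) < 1 ∧ IsUnit (1 - Bᵀ ⊗ₖ Bᴴ) ∧
      cSpecNorm (1 - Bᵀ ⊗ₖ Bᴴ)⁻¹ ≤ C * K ^ 2 / (1 - q) := by
  have := neumann_of_pow_le (Bᵀ ⊗ₖ Bᴴ) (K := C * K ^ 2) hq0 hq1 (fun k => by
    rw [transpose_kronecker_conjTranspose_pow]
    refine (hCB _).trans ?_
    have h1 : ‖B ^ k‖ ^ 2 ≤ (K * q ^ k) ^ 2 := by gcongr; exact hB k
    have h2 : (q ^ k) ^ 2 ≤ q ^ k := by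
      have := pow_le_one₀ hq0 hq1.le (n := k)
      have := pow_nonneg hq0 k
      nlinarith
    calc C * ‖B ^ k‖ ^ 2 ≤ C * (K * q ^ k) ^ 2 := by gcongr
      _ = C * K ^ 2 * (q ^ k) ^ 2 := by ring
      _ ≤ C * K ^ 2 * q ^ k := by gcongr)
  rw [← nonsing_inv_eq_ringInverse] at this
  exact this

end Kronecker

/-! ### The resolvent bound -/

/-- **Low-rank approximation lemma, part (i).**
Setting: `M ≥ P ≥ 1`; `U ∈ ℂ^{M×P}` has orthonormal columns, `A` satisfies `AU = U`,
`UᴴA = Uᴴ` and `ρ(A - UUᴴ) < 1`; `H` is Hermitian with `0 ≤ H ≤ δI` and `νI_P ≤ UᴴHU`,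
`0 < ν ≤ δ`; `B_μ = A(I - μH)` and `F_μ = B_μᵀ ⊗ B_μᴴ` (Kronecker product).
Conclusion: there exist `μ₀ > 0` and `C > 0` such that for all `μ ∈ (0, μ₀)`:
`ρ(F_μ) < 1`, the matrix `I - F_μ` is invertible, and `‖(I - F_μ)⁻¹‖ ≤ C/μ`. -/
theorem low_rank_approximation_part_i
    {M P : ℕ} (hP : 1 ≤ P) (hPM : P ≤ M)
    (U : Matrix (Fin M) (Fin P) ℂ) (A H : Matrix (Fin M) (Fin M) ℂ)
    (ν δ : ℝ) (hν : 0 < ν) (hνδ : ν ≤ δ)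
    (hUU : Uᴴ * U = 1)
    (hAU : A * U = U)
    (hUA : Uᴴ * A = Uᴴ)
    (hρ : spectralRadius ℂ (A - U * Uᴴ) < 1)
    (hH0 : H.PosSemidef)
    (hHδ : ((δ : ℂ) • (1 : Matrix (Fin M) (Fin M) ℂ) - H).PosSemidef)
    (hHν : (Uᴴ * H * U - (ν : ℂ) • (1 : Matrix (Fin P) (Fin P) ℂ)).PosSemidef) :
    ∃ μ₀ : ℝ, 0 < μ₀ ∧ ∃ C : ℝ, 0 < C ∧ ∀ μ : ℝ, 0 < μ → μ < μ₀ →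
      spectralRadius ℂ ((A * (1 - (μ : ℂ) • H))ᵀ ⊗ₖ (A * (1 - (μ : ℂ) • H))ᴴ) < 1 ∧
      IsUnit (1 - (A * (1 - (μ : ℂ) • H))ᵀ ⊗ₖ (A * (1 - (μ : ℂ) • H))ᴴ) ∧
      cSpecNorm (1 - (A * (1 - (μ : ℂ) • H))ᵀ ⊗ₖ (A * (1 - (μ : ℂ) • H))ᴴ)⁻¹ ≤ C / μ := by
  set T := Matrix.toEuclideanCLM (n := Fin M) (𝕜 := ℂ) with hT
  have hPU : U * Uᴴ * (U * Uᴴ) = U * Uᴴ := by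
    rw [Matrix.mul_assoc, ← Matrix.mul_assoc Uᴴ, hUU, Matrix.one_mul]
  have hAP : A * (U * Uᴴ) = U * Uᴴ := by rw [← Matrix.mul_assoc, hAU]
  have hPA : U * Uᴴ * A = U * Uᴴ := by rw [Matrix.mul_assoc, hUA]
  have hherm : (U * Uᴴ)ᴴ = U * Uᴴ := by simp
  have hsymm : ∀ x y, inner ℂ (T (U * Uᴴ) x) y = inner ℂ x (T (U * Uᴴ) y) := by
    intro x y
    have h1 : star (T (U * Uᴴ)) = T (U * Uᴴ) := by
      rw [← map_star, star_eq_conjTranspose, hherm]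
    conv_rhs => rw [← h1, ContinuousLinearMap.star_eq_adjoint,
      ContinuousLinearMap.adjoint_inner_right]
  have hpp : T (U * Uᴴ) * T (U * Uᴴ) = T (U * Uᴴ) := by rw [← map_mul, hPU]
  have hpos : ∀ x, ν * ‖T (U * Uᴴ) x‖ ^ 2
      ≤ RCLike.re (inner ℂ (T (U * Uᴴ) x) (T H (T (U * Uᴴ) x))) := by
    intro x
    have h1 := hHν.mul_mul_conjTranspose_same U
    have h2 : U * (Uᴴ * H * U - (ν : ℂ) • 1) * Uᴴ
        = U * Uᴴ * H * (U * Uᴴ) - (ν : ℂ) • (U * Uᴴ) := by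
      simp only [Matrix.mul_sub, Matrix.sub_mul, Matrix.mul_assoc, Matrix.mul_smul,
        Matrix.smul_mul, Matrix.one_mul]
    rw [h2, ← isPositive_toEuclideanLin_iff] at h1
    have h3 : 0 ≤ RCLike.re (inner ℂ x
        (T (U * Uᴴ * H * (U * Uᴴ) - (ν : ℂ) • (U * Uᴴ)) x)) := h1.re_inner_nonneg_right x
    have h4 : inner ℂ x (T (U * Uᴴ) x) = inner ℂ (T (U * Uᴴ) x) (T (U * Uᴴ) x) := by
      rw [hsymm, ← mul_apply_eq_comp, hpp]
    rw [map_sub, map_smul, map_mul, map_mul, _root_.sub_apply,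
      _root_.smul_apply, mul_apply_eq_comp,
      mul_apply_eq_comp, inner_sub_right, inner_smul_right, ← hsymm, h4,
      inner_self_eq_norm_sq_to_K] at h3
    have h5 : RCLike.re ((ν : ℂ) * ((‖T (U * Uᴴ) x‖ : ℂ)) ^ 2) = ν * ‖T (U * Uᴴ) x‖ ^ 2 := by
      norm_cast
    rw [map_sub] at h3
    exact h5.symm.le.trans (sub_nonneg.1 h3)
  have hρ' : spectralRadius ℂ (T A - T (U * Uᴴ)) < 1 := by
    rw [← map_sub]
    unfold spectralRadius
    rw [AlgEquiv.spectrum_eq T]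
    exact hρ
  obtain ⟨r, hr, hr1, m, hm, hN⟩ := exists_norm_pow_le _ hρ'
  obtain ⟨μ₀, hμ₀, c, hc, K, hK, hdec⟩ := exists_uniform_decay (T A) (T (U * Uᴴ)) (T H) hpp
    (by rw [← map_mul, hAP]) (by rw [← map_mul, hPA]) hsymm hν hpos hr hr1 hm hN
  obtain ⟨C, hC, hCB⟩ := exists_norm_kronecker_le M
  refine ⟨μ₀, hμ₀, C * K ^ 2 / c, by positivity, fun μ hμ hlt => ?_⟩
  obtain ⟨hq, hB⟩ := hdec μ hμ hlt
  have hcμ : 0 < c * μ := by positivity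
  have := resolvent_kronecker hC hCB (A * (1 - (μ : ℂ) • H)) (K := K) (q := 1 - c * μ)
    (by linarith) (by linarith) (fun k => by
      have h1 := hB k
      rw [← map_one T, ← map_smul, ← map_sub, ← map_mul, ← map_pow] at h1
      exact h1)
  rw [sub_sub_cancel, ← div_div] at this
  exact this
end

section
/- Low-rank approximation lemma, part (ii). Let F_μ = B_μᵀ ⊗ B_μ^* and let Z_μ = I_P ⊗ (μ U* H U) + (μ U* H U)ᵀ ⊗ I_P ∈ ℂ^{P²×P²}, which is invertible since U* H U is Hermitian positive definite. Then there exist μ₀ > 0 and C > 0 such that for all μ ∈ (0, μ₀): ‖(I_{M²} − F_μ)^{-1} − (conj(U) ⊗ U) Z_μ^{-1} (Uᵀ ⊗ U*)‖ ≤ C, where conj(U) denotes entrywise complex conjugation; i.e., (I − F_μ)^{-1} equals the rank-P² matrix (conj(U) ⊗ U) Z_μ^{-1} (Uᵀ ⊗ U*) up to an O(1) correction, while (I − F_μ)^{-1} itself is O(1/μ). -/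
/-!
Put `V = conj U ⊗ U`, so that `Vᴴ = Uᵀ ⊗ Uᴴ` and `Q = V Vᴴ` is an orthogonal projector, and expand
`I - F_μ = T₀ + μ E + μ² G` with `T₀ = I - Aᵀ ⊗ Aᴴ`.  Then `T₀ V = 0`, `Vᴴ T₀ = 0`, and
`Vᴴ E V = Z` with `Z_μ = μ Z`; the matrix `Z` is positive definite, hence invertible.

The matrix `T₀ + Q = I - (Aᵀ ⊗ Aᴴ - Q)` is invertible, because the powers
`(Aᵀ ⊗ Aᴴ - Q)^k = (A^k)ᵀ ⊗ (A^k)ᴴ - Q`, `k ≥ 1`, tend to `0`: indeed `A^k - U Uᴴ = (A - U Uᴴ)^k → 0` by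
Gelfand's formula (`tendsto_pow_zero_of_spectralRadius_lt_one`, `isUnit_one_sub_kronecker_add`).

With `L = V Z⁻¹ Vᴴ` and `R = (T₀ + Q)⁻¹ (I - E L)`, the relation `Q (I - E L) = 0` yields
`T₀ R = I - E L`, and therefore `(I - F_μ)(μ⁻¹ L + R) = I + μ W_μ` with
`W_μ = G L + E R + μ G R`.  Hence
`(I - F_μ)⁻¹ - μ⁻¹ L = (R - L W_μ)(I + μ W_μ)⁻¹`, whose right-hand side is continuous at `μ = 0`,
so it is bounded for small `μ` (`exists_bound_inv_sub`).
-/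


open Matrix
open scoped ComplexOrder Kronecker

open scoped Matrix.Norms.L2Operator Topology
open Filter

theorem tendsto_pow_zero_of_spectralRadius_lt_one {n : Type*} [Fintype n] [DecidableEq n]
    (N : Matrix n n ℂ) (h : spectralRadius ℂ N < 1) :
    Tendsto (fun k : ℕ => N ^ k) atTop (𝓝 0) := by
  have hG := spectrum.pow_nnnorm_pow_one_div_tendsto_nhds_spectralRadius N
  obtain ⟨r, hr1, hr2⟩ := ENNReal.lt_iff_exists_nnreal_btwn.1 h
  have hr2' : r < 1 := by exact_mod_cast hr2
  have hev := hG.eventually (gt_mem_nhds hr1)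
  have hr : Tendsto (fun k : ℕ => (r : ℝ) ^ k) atTop (𝓝 0) :=
    tendsto_pow_atTop_nhds_zero_of_lt_one r.2 (by exact_mod_cast hr2')
  refine squeeze_zero_norm' ?_ hr
  filter_upwards [hev, eventually_gt_atTop 0] with k hk hk0
  have hk0' : (0 : ℝ) < k := by exact_mod_cast hk0
  have h1 := ENNReal.rpow_lt_rpow hk hk0'
  rw [← ENNReal.rpow_mul, one_div, inv_mul_cancel₀ hk0'.ne', ENNReal.rpow_one,
    ENNReal.rpow_natCast] at h1
  have h2 : ‖N ^ k‖₊ < r ^ k := by exact_mod_cast h1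
  exact_mod_cast h2.le

/-- For `k` with `‖Y ^ k‖ < 1`, the matrix `1 - Y` divides the unit `1 - Y ^ k`. -/
theorem isUnit_one_sub_of_tendsto_pow {n : Type*} [Fintype n] [DecidableEq n]
    (Y : Matrix n n ℂ) (h : Tendsto (fun k : ℕ => Y ^ k) atTop (𝓝 0)) : IsUnit (1 - Y) := by
  have h1 : ∀ᶠ k : ℕ in atTop, ‖Y ^ k‖ < 1 := by
    have := h.norm
    rw [norm_zero] at this
    exact this.eventually (gt_mem_nhds one_pos)
  obtain ⟨k, hk⟩ := h1.exists
  have hu : IsUnit (1 - Y ^ k) := isUnit_one_sub_of_norm_lt_one hk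
  rw [← mul_neg_geom_sum] at hu
  rw [Matrix.isUnit_iff_isUnit_det] at hu ⊢
  rw [Matrix.det_mul] at hu
  exact isUnit_of_mul_isUnit_left hu

/-- Resolvent expansion at a semisimple singularity: `T₀` vanishes on the range of `V`,
`W` annihilates the range of `T₀`, adding the projector `V W` to `T₀` makes it invertible, and the
first-order term `E` compresses to the invertible matrix `Z`. -/
theorem exists_bound_inv_sub {n p : Type*} [Fintype n] [DecidableEq n] [Fintype p] [DecidableEq p]
    (T₀ E G : Matrix n n ℂ) (V : Matrix n p ℂ) (W : Matrix p n ℂ) (Z : Matrix p p ℂ)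
    (hWV : W * V = 1) (hTV : T₀ * V = 0) (hWT : W * T₀ = 0) (hu : IsUnit (T₀ + V * W))
    (hE : W * E * V = Z) (hZ : IsUnit Z) :
    ∃ μ₀ : ℝ, 0 < μ₀ ∧ ∃ C : ℝ, 0 < C ∧ ∀ μ : ℝ, 0 < μ → μ < μ₀ →
      ‖(T₀ + (μ : ℂ) • E + (μ : ℂ) ^ 2 • G)⁻¹ - V * ((μ : ℂ) • Z)⁻¹ * W‖ ≤ C := by
  have hZ' := (Matrix.isUnit_iff_isUnit_det _).1 hZ
  have hu' := (Matrix.isUnit_iff_isUnit_det _).1 hu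
  set L := V * Z⁻¹ * W with hL
  set R := (T₀ + V * W)⁻¹ * (1 - E * L) with hR
  have hWEL : W * (E * L) = W := by
    have : W * (E * L) = (W * E * V) * Z⁻¹ * W := by simp only [hL, Matrix.mul_assoc]
    rw [this, hE, Matrix.mul_nonsing_inv _ hZ', Matrix.one_mul]
  have hTL : T₀ * L = 0 := by
    rw [hL, ← Matrix.mul_assoc, ← Matrix.mul_assoc, hTV, Matrix.zero_mul, Matrix.zero_mul]
  have hWS : W * (T₀ + V * W)⁻¹ = W := by
    have h1 : W * (T₀ + V * W) = W := by
      rw [Matrix.mul_add, hWT, ← Matrix.mul_assoc, hWV, Matrix.one_mul, zero_add]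
    calc W * (T₀ + V * W)⁻¹ = W * (T₀ + V * W) * (T₀ + V * W)⁻¹ := by rw [h1]
      _ = W := by rw [Matrix.mul_assoc, Matrix.mul_nonsing_inv _ hu', Matrix.mul_one]
  have hWR : W * R = 0 := by
    rw [hR, ← Matrix.mul_assoc, hWS, Matrix.mul_sub, Matrix.mul_one, hWEL, sub_self]
  have hTR : T₀ * R = 1 - E * L := by
    have h1 : (T₀ + V * W) * R = 1 - E * L := by
      rw [hR, ← Matrix.mul_assoc, Matrix.mul_nonsing_inv _ hu', Matrix.one_mul]
    rwa [Matrix.add_mul, Matrix.mul_assoc V, hWR, Matrix.mul_zero, add_zero] at h1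
  let K : ℝ → Matrix n n ℂ := fun μ => G * L + E * R + (μ : ℂ) • (G * R)
  let J : ℝ → Matrix n n ℂ := fun μ => 1 + (μ : ℂ) • K μ
  have hK : Continuous K := by fun_prop
  have hJ : Continuous J := by fun_prop
  have hJ0 : J 0 = 1 := by simp [J]
  have hinv : ContinuousAt (fun μ => (R - L * K μ) * Ring.inverse (J μ)) 0 := by
    have h1 : ContinuousAt Ring.inverse (J 0) := by
      rw [hJ0]; exact NormedRing.inverse_continuousAt (1 : (Matrix n n ℂ)ˣ)
    have h2 : ContinuousAt (fun μ => Ring.inverse (J μ)) 0 :=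
      ContinuousAt.comp (f := J) h1 hJ.continuousAt
    have h3 : ContinuousAt (fun μ => R - L * K μ) 0 := by fun_prop
    exact h3.mul h2
  have hunit : ∀ᶠ μ in 𝓝 (0 : ℝ), IsUnit (J μ) := by
    have : {x : Matrix n n ℂ | IsUnit x} ∈ 𝓝 (J 0) := by
      rw [hJ0]; exact Units.isOpen.mem_nhds isUnit_one
    exact hJ.continuousAt this
  have hbd := hinv.norm.eventually (gt_mem_nhds (lt_add_one _))
  obtain ⟨ε, hε, hball⟩ := Metric.eventually_nhds_iff.1 (hunit.and hbd)
  refine ⟨ε, hε, ‖(R - L * K 0) * Ring.inverse (J 0)‖ + 1, by positivity, fun μ hμ hμε => ?_⟩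
  obtain ⟨hJu, hb⟩ := hball (y := μ) (by simpa [abs_of_pos hμ] using hμε)
  refine le_of_eq_of_le ?_ hb.le
  congr 1
  have hμc : (μ : ℂ) ≠ 0 := by exact_mod_cast hμ.ne'
  rw [← Matrix.nonsing_inv_eq_ringInverse]
  have hJd := (Matrix.isUnit_iff_isUnit_det _).1 hJu
  have hZinv : V * ((μ : ℂ) • Z)⁻¹ * W = (μ : ℂ)⁻¹ • L := by
    have : ((μ : ℂ) • Z)⁻¹ = (μ : ℂ)⁻¹ • Z⁻¹ := by
      apply Matrix.inv_eq_right_inv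
      rw [smul_mul_smul_comm, mul_inv_cancel₀ hμc, one_smul, Matrix.mul_nonsing_inv _ hZ']
    rw [this, Matrix.mul_smul, Matrix.smul_mul]
  have hprod : (T₀ + (μ : ℂ) • E + (μ : ℂ) ^ 2 • G) * ((μ : ℂ)⁻¹ • L + R) = J μ := by
    have e1 : (μ : ℂ) * (μ : ℂ)⁻¹ = 1 := mul_inv_cancel₀ hμc
    have e2 : (μ : ℂ) ^ 2 * (μ : ℂ)⁻¹ = μ := by field_simp
    simp only [J, K, Matrix.add_mul, Matrix.mul_add, Matrix.smul_mul, Matrix.mul_smul, hTL, hTR,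
      smul_zero, smul_add, smul_smul, mul_comm (μ : ℂ)⁻¹, e1, e2, one_smul]
    rw [← pow_two]
    abel
  have hTinv : (T₀ + (μ : ℂ) • E + (μ : ℂ) ^ 2 • G)⁻¹ = ((μ : ℂ)⁻¹ • L + R) * (J μ)⁻¹ := by
    apply Matrix.inv_eq_right_inv
    rw [← Matrix.mul_assoc, hprod, Matrix.mul_nonsing_inv _ hJd]
  rw [hTinv, hZinv]
  have hL' : (μ : ℂ)⁻¹ • L = ((μ : ℂ)⁻¹ • L * J μ) * (J μ)⁻¹ := by
    rw [Matrix.mul_assoc, Matrix.mul_nonsing_inv _ hJd, Matrix.mul_one]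
  have hLJ : (μ : ℂ)⁻¹ • L * J μ = (μ : ℂ)⁻¹ • L + L * K μ := by
    simp only [J, Matrix.mul_add, Matrix.mul_one, Matrix.smul_mul, Matrix.mul_smul, smul_smul,
      mul_inv_cancel₀ hμc, one_smul]
  nth_rewrite 2 [hL']
  rw [← Matrix.sub_mul, hLJ]
  congr 1
  abel

/-- Powers of `a - q` when the idempotent `q` absorbs `a`; the formula fails for exponent `0`. -/
theorem sub_pow_succ_of_absorb {S : Type*} [Ring S] (a q : S) (h1 : a * q = q)
    (h2 : q * a = q) (h3 : q * q = q) (k : ℕ) : (a - q) ^ (k + 1) = a ^ (k + 1) - q := by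
  have h4 : ∀ k : ℕ, a ^ k * q = q := by
    intro k
    induction k with
    | zero => simp
    | succ k ih => rw [pow_succ, mul_assoc, h1, ih]
  induction k with
  | zero => simp
  | succ k ih =>
    rw [pow_succ, ih, sub_mul, mul_sub, mul_sub, h2, h3, h4, ← pow_succ]
    abel

/-- The eigenvalue `1` of `Aᵀ ⊗ Aᴴ` is removed by subtracting the projector `V Vᴴ`, where
`V = conj U ⊗ U`. -/
theorem isUnit_one_sub_kronecker_add {m p : Type*} [Fintype m] [DecidableEq m] [Fintype p]
    [DecidableEq p] (U : Matrix m p ℂ) (A : Matrix m m ℂ) (hUU : Uᴴ * U = 1) (hAU : A * U = U)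
    (hUA : Uᴴ * A = Uᴴ) (hρ : spectralRadius ℂ (A - U * Uᴴ) < 1) :
    IsUnit (1 - Aᵀ ⊗ₖ Aᴴ + ((U * Uᴴ)ᵀ) ⊗ₖ ((U * Uᴴ)ᴴ)) := by
  set Q := U * Uᴴ with hQ
  have hAQ : A * Q = Q := by rw [hQ, ← Matrix.mul_assoc, hAU]
  have hQA : Q * A = Q := by rw [hQ, Matrix.mul_assoc, hUA]
  have hQQ : Q * Q = Q := by
    rw [hQ, Matrix.mul_assoc, ← Matrix.mul_assoc Uᴴ, hUU, Matrix.one_mul]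
  have hN := (tendsto_pow_zero_of_spectralRadius_lt_one _ hρ).comp (tendsto_add_atTop_nat 1)
  have hA : Tendsto (fun k : ℕ => A ^ (k + 1)) atTop (𝓝 Q) := by
    have := hN.add_const Q
    simpa [Function.comp_def, sub_pow_succ_of_absorb A Q hAQ hQA hQQ] using this
  have hcont : Continuous fun X : Matrix m m ℂ => Xᵀ ⊗ₖ Xᴴ - Qᵀ ⊗ₖ Qᴴ := by
    refine Continuous.sub (continuous_matrix fun i j => ?_) continuous_const
    simp only [Matrix.kroneckerMap_apply, Matrix.transpose_apply, Matrix.conjTranspose_apply]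
    exact (continuous_id.matrix_elem _ _).mul (continuous_id.matrix_elem _ _).star
  have hlim := (hcont.tendsto Q).comp hA
  rw [sub_self] at hlim
  have hk : ∀ (X : Matrix m m ℂ) (k : ℕ), (Xᵀ ⊗ₖ Xᴴ) ^ k = (X ^ k)ᵀ ⊗ₖ (X ^ k)ᴴ := by
    intro X k
    induction k with
    | zero => simp
    | succ k ih =>
      rw [pow_succ, ih, ← Matrix.mul_kronecker_mul, pow_succ', Matrix.transpose_mul,
        Matrix.conjTranspose_mul]
  have hlim' : Tendsto (fun k : ℕ => (Aᵀ ⊗ₖ Aᴴ - Qᵀ ⊗ₖ Qᴴ) ^ (k + 1)) atTop (𝓝 0) := by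
    refine hlim.congr fun k => ?_
    rw [sub_pow_succ_of_absorb (Aᵀ ⊗ₖ Aᴴ) (Qᵀ ⊗ₖ Qᴴ), hk]
    · rfl
    all_goals
      rw [← Matrix.mul_kronecker_mul, ← Matrix.transpose_mul, ← Matrix.conjTranspose_mul]
      first | rw [hQA] | rw [hAQ] | rw [hQQ]
  have := isUnit_one_sub_of_tendsto_pow _ ((tendsto_add_atTop_iff_nat 1).1 hlim')
  rwa [← sub_add] at this

/-- **Low-rank approximation lemma, part (ii).**
Setting: `M ≥ P ≥ 1`; `U ∈ ℂ^{M×P}` has orthonormal columns, `A` satisfies `AU = U`,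
`UᴴA = Uᴴ` and `ρ(A - UUᴴ) < 1`; `H` is Hermitian with `0 ≤ H ≤ δI` and `νI_P ≤ UᴴHU`,
`0 < ν ≤ δ`; `B_μ = A(I - μH)`, `F_μ = B_μᵀ ⊗ B_μᴴ`, and
`Z_μ = I_P ⊗ (μ UᴴHU) + (μ UᴴHU)ᵀ ⊗ I_P`, which is invertible.  Conclusion: there exist
`μ₀ > 0` and `C > 0` such that for all `μ ∈ (0, μ₀)`:
`‖(I - F_μ)⁻¹ - (conj U ⊗ U) Z_μ⁻¹ (Uᵀ ⊗ Uᴴ)‖ ≤ C`. -/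
theorem low_rank_approximation_part_ii
    {M P : ℕ} (hP : 1 ≤ P) (hPM : P ≤ M)
    (U : Matrix (Fin M) (Fin P) ℂ) (A H : Matrix (Fin M) (Fin M) ℂ)
    (ν δ : ℝ) (hν : 0 < ν) (hνδ : ν ≤ δ)
    (hUU : Uᴴ * U = 1)
    (hAU : A * U = U)
    (hUA : Uᴴ * A = Uᴴ)
    (hρ : spectralRadius ℂ (A - U * Uᴴ) < 1)
    (hH0 : H.PosSemidef)
    (hHδ : ((δ : ℂ) • (1 : Matrix (Fin M) (Fin M) ℂ) - H).PosSemidef)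
    (hHν : (Uᴴ * H * U - (ν : ℂ) • (1 : Matrix (Fin P) (Fin P) ℂ)).PosSemidef) :
    ∃ μ₀ : ℝ, 0 < μ₀ ∧ ∃ C : ℝ, 0 < C ∧ ∀ μ : ℝ, 0 < μ → μ < μ₀ →
      IsUnit ((1 : Matrix (Fin P) (Fin P) ℂ) ⊗ₖ ((μ : ℂ) • (Uᴴ * H * U)) +
          ((μ : ℂ) • (Uᴴ * H * U))ᵀ ⊗ₖ (1 : Matrix (Fin P) (Fin P) ℂ)) ∧
      cSpecNorm
        ((1 - (A * (1 - (μ : ℂ) • H))ᵀ ⊗ₖ (A * (1 - (μ : ℂ) • H))ᴴ)⁻¹ -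
          (U.map (starRingEnd ℂ)) ⊗ₖ U *
            ((1 : Matrix (Fin P) (Fin P) ℂ) ⊗ₖ ((μ : ℂ) • (Uᴴ * H * U)) +
              ((μ : ℂ) • (Uᴴ * H * U))ᵀ ⊗ₖ (1 : Matrix (Fin P) (Fin P) ℂ))⁻¹ *
            (Uᵀ ⊗ₖ Uᴴ)) ≤ C := by
  have hUU' : Uᵀ * U.map (starRingEnd ℂ) = 1 := by
    have := congrArg Matrix.transpose hUU
    rwa [Matrix.transpose_mul, Matrix.transpose_one] at this
  have hconj : (Uᴴ)ᵀ = U.map (starRingEnd ℂ) := rfl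
  have hAU' : Aᵀ * U.map (starRingEnd ℂ) = U.map (starRingEnd ℂ) := by
    rw [← hconj, ← Matrix.transpose_mul, hUA]
  have hUA' : Uᵀ * Aᵀ = Uᵀ := by rw [← Matrix.transpose_mul, hAU]
  have hAU'' : Aᴴ * U = U := by
    have := congrArg Matrix.conjTranspose hUA
    rwa [Matrix.conjTranspose_mul, Matrix.conjTranspose_conjTranspose] at this
  have hUA'' : Uᴴ * Aᴴ = Uᴴ := by rw [← Matrix.conjTranspose_mul, hAU]
  have hh : (Uᴴ * H * U).PosDef := by
    have h1 : ((ν : ℂ) • (1 : Matrix (Fin P) (Fin P) ℂ)).PosDef :=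
      Matrix.PosDef.one.smul (by exact_mod_cast hν)
    have := Matrix.PosDef.posSemidef_add hHν h1
    rwa [sub_add_cancel] at this
  set h := Uᴴ * H * U with hhdef
  set Z := (1 : Matrix (Fin P) (Fin P) ℂ) ⊗ₖ h + hᵀ ⊗ₖ (1 : Matrix (Fin P) (Fin P) ℂ) with hZdef
  have hZ : IsUnit Z :=
    ((Matrix.PosDef.one.kronecker hh).add (hh.transpose.kronecker Matrix.PosDef.one)).isUnit
  have hZμ : ∀ μ : ℝ, (1 : Matrix (Fin P) (Fin P) ℂ) ⊗ₖ ((μ : ℂ) • h) +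
      ((μ : ℂ) • h)ᵀ ⊗ₖ (1 : Matrix (Fin P) (Fin P) ℂ) = (μ : ℂ) • Z := by
    intro μ
    rw [Matrix.transpose_smul, Matrix.kronecker_smul, Matrix.smul_kronecker, smul_add]
  have hT : ∀ μ : ℝ, 1 - (A * (1 - (μ : ℂ) • H))ᵀ ⊗ₖ (A * (1 - (μ : ℂ) • H))ᴴ =
      (1 - Aᵀ ⊗ₖ Aᴴ) + (μ : ℂ) • (Aᵀ ⊗ₖ (A * H)ᴴ + (A * H)ᵀ ⊗ₖ Aᴴ) +
        (μ : ℂ) ^ 2 • (-((A * H)ᵀ ⊗ₖ (A * H)ᴴ)) := by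
    intro μ
    have h1 : A * (1 - (μ : ℂ) • H) = A - (μ : ℂ) • (A * H) := by
      rw [Matrix.mul_sub, Matrix.mul_one, Matrix.mul_smul]
    rw [h1]
    generalize A * H = X
    ext ⟨i, i'⟩ ⟨j, j'⟩
    simp [Matrix.kroneckerMap_apply]
    ring
  obtain ⟨μ₀, hμ₀, C, hC, hbound⟩ := exists_bound_inv_sub (1 - Aᵀ ⊗ₖ Aᴴ)
    (Aᵀ ⊗ₖ (A * H)ᴴ + (A * H)ᵀ ⊗ₖ Aᴴ) (-((A * H)ᵀ ⊗ₖ (A * H)ᴴ))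
    (U.map (starRingEnd ℂ) ⊗ₖ U) (Uᵀ ⊗ₖ Uᴴ) Z
    (by rw [← Matrix.mul_kronecker_mul, hUU', hUU, Matrix.one_kronecker_one])
    (by rw [Matrix.sub_mul, Matrix.one_mul, ← Matrix.mul_kronecker_mul, hAU', hAU'', sub_self])
    (by rw [Matrix.mul_sub, Matrix.mul_one, ← Matrix.mul_kronecker_mul, hUA', hUA'', sub_self])
    (by
      have := isUnit_one_sub_kronecker_add U A hUU hAU hUA hρ
      rwa [Matrix.transpose_mul, hconj, Matrix.conjTranspose_mul,
        Matrix.conjTranspose_conjTranspose, Matrix.mul_kronecker_mul] at this)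
    (by
      have e1 : Uᴴ * (A * H)ᴴ * U = h := by
        rw [Matrix.conjTranspose_mul, hH0.1.eq, hhdef, Matrix.mul_assoc, Matrix.mul_assoc, hAU'',
          Matrix.mul_assoc]
      have e2 : Uᵀ * (A * H)ᵀ * U.map (starRingEnd ℂ) = hᵀ := by
        rw [hhdef, ← hconj, ← Matrix.transpose_mul, ← Matrix.transpose_mul, ← Matrix.mul_assoc,
          ← Matrix.mul_assoc, hUA]
      rw [Matrix.mul_add, Matrix.add_mul, ← Matrix.mul_kronecker_mul, ← Matrix.mul_kronecker_mul,
        ← Matrix.mul_kronecker_mul, ← Matrix.mul_kronecker_mul, e1, e2, hUA', hUU', hUA'', hUU])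
    hZ
  refine ⟨μ₀, hμ₀, C, hC, fun μ hμ hμμ => ?_⟩
  rw [hZμ, hT]
  refine ⟨?_, hbound μ hμ hμμ⟩
  have hμc : (μ : ℂ) ≠ 0 := by exact_mod_cast hμ.ne'
  exact hZ.smul (Units.mk0 (μ : ℂ) hμc)
end

section
/- Stability of the coefficient matrix B. There exists μ₀ > 0 such that for every μ ∈ (0, μ₀), the matrix B_μ = A(I_M − μH) has spectral radius ρ(B_μ) < 1. -/
/-!
Suppose `λ` with `‖λ‖ ≥ 1` is an eigenvalue of `B_μ = A (1 - μH)` with eigenvector `v`, and split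
`v = U a + w` with `a = Uᴴ v`. Put `K = A - U Uᴴ`, so that `Uᴴ K = 0` and `K U = 0`. The eigenvalue
equation splits into

* `λ a = (1 - μ UᴴHU) a - μ UᴴH w`, and
* `(λ - K) w = - μ K H v`.

As `ρ(K) < 1`, the inverse of `1 - zK` is bounded uniformly over the closed unit disc
(`exists_bound_inverse`); with `z = λ⁻¹` the second equation gives `‖w‖ ≤ μ D ‖v‖`, hence
`‖v‖ ≤ 2 ‖a‖` for small `μ`. Since `ν ≤ UᴴHU ≤ δ`, one has `‖1 - μ UᴴHU‖ ≤ 1 - μν`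
(`norm_one_sub_smul_le`), and the first equation gives
`‖a‖ ≤ (1 - μν) ‖a‖ + 2 μ² ‖H‖ D ‖a‖`, which is impossible for small `μ` because `a ≠ 0`.

Vectors are handled as one-column matrices, so that every estimate is an instance of
submultiplicativity of the L2 operator norm on rectangular matrices.
-/

open Matrix
open scoped ComplexOrder

open scoped Matrix.Norms.L2Operator MatrixOrder

/-- A matrix of spectral radius less than one has `(1 - zK)⁻¹` bounded on the closed unit disc,
by continuity of inversion at units and compactness of the disc. -/
lemma exists_bound_inverse {M : ℕ} (K : Matrix (Fin M) (Fin M) ℂ)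
    (hρ : spectralRadius ℂ K < 1) :
    ∃ C : ℝ, 0 ≤ C ∧ ∀ z : ℂ, ‖z‖ ≤ 1 →
      ∃ R : Matrix (Fin M) (Fin M) ℂ, ‖R‖ ≤ C ∧ R * (1 - z • K) = 1 := by
  have hunit : ∀ z : ℂ, ‖z‖ ≤ 1 → IsUnit (1 - z • K) := by
    intro z hz
    by_cases hz0 : z = 0
    · simp [hz0]
    have hns : z⁻¹ ∉ spectrum ℂ K := by
      intro hmem
      have h1 : (‖z⁻¹‖₊ : ENNReal) ≤ spectralRadius ℂ K :=
        le_iSup₂ (f := fun k (_ : k ∈ spectrum ℂ K) => (‖k‖₊ : ENNReal)) z⁻¹ hmem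
      have h2 : ‖z⁻¹‖₊ < 1 := by exact_mod_cast lt_of_le_of_lt h1 hρ
      have h3 : ‖z‖⁻¹ < 1 := by
        have : ‖z⁻¹‖ < 1 := by exact_mod_cast h2
        simpa using this
      have h4 : 1 ≤ ‖z‖⁻¹ := (one_le_inv₀ (norm_pos_iff.2 hz0)).2 hz
      linarith
    rw [spectrum.notMem_iff] at hns
    have h5 : 1 - z • K = Units.mk0 z hz0 • (algebraMap ℂ (Matrix (Fin M) (Fin M) ℂ) z⁻¹ - K) := by
      rw [Units.smul_mk0, smul_sub, Algebra.algebraMap_eq_smul_one, smul_smul,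
        mul_inv_cancel₀ hz0, one_smul]
    rw [h5]
    exact hns.smul _
  have hcont : ContinuousOn (fun z : ℂ => Ring.inverse (1 - z • K)) (Metric.closedBall 0 1) := by
    intro z hz
    obtain ⟨u, hu⟩ := hunit z (by simpa using hz)
    have h1 : ContinuousAt (Ring.inverse : Matrix (Fin M) (Fin M) ℂ → _) (1 - z • K) := by
      rw [← hu]
      exact NormedRing.inverse_continuousAt u
    have h2 : ContinuousAt (fun z : ℂ => 1 - z • K) z := by fun_prop
    exact (ContinuousAt.comp (f := fun z : ℂ => 1 - z • K) h1 h2).continuousWithinAt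
  obtain ⟨C, hC⟩ := (isCompact_closedBall (0 : ℂ) 1).exists_bound_of_continuousOn hcont
  refine ⟨C, (norm_nonneg _).trans (hC 0 (by simp)), fun z hz => ⟨_, hC z (by simpa using hz), ?_⟩⟩
  exact Ring.inverse_mul_cancel _ (hunit z hz)

lemma norm_one_sub_smul_le {P : ℕ} (G : Matrix (Fin P) (Fin P) ℂ) (ν δ μ : ℝ)
    (hlow : (G - (ν : ℂ) • (1 : Matrix (Fin P) (Fin P) ℂ)).PosSemidef)
    (hupp : ((δ : ℂ) • (1 : Matrix (Fin P) (Fin P) ℂ) - G).PosSemidef)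
    (hμ : 0 ≤ μ) (hνδ : ν ≤ δ) (hμδ : μ * δ ≤ 1) :
    ‖1 - (μ : ℂ) • G‖ ≤ 1 - μ * ν := by
  have hμC : (0 : ℂ) ≤ (μ : ℂ) := by exact_mod_cast hμ
  have hc : (0 : ℂ) ≤ ((1 - μ * δ : ℝ) : ℂ) := by
    have : (0 : ℝ) ≤ 1 - μ * δ := by linarith
    exact_mod_cast this
  have h0 : (0 : Matrix (Fin P) (Fin P) ℂ) ≤ 1 - (μ : ℂ) • G := by
    rw [Matrix.nonneg_iff_posSemidef]
    have h := (Matrix.PosSemidef.one (n := Fin P) (R := ℂ)).smul hc |>.add (hupp.smul hμC)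
    have he : 1 - (μ : ℂ) • G = ((1 - μ * δ : ℝ) : ℂ) • (1 : Matrix (Fin P) (Fin P) ℂ)
        + (μ : ℂ) • ((δ : ℂ) • (1 : Matrix (Fin P) (Fin P) ℂ) - G) := by
      push_cast
      module
    rw [he]
    exact h
  have hr : 0 ≤ 1 - μ * ν := by nlinarith
  rw [CStarAlgebra.norm_le_iff_le_algebraMap _ hr h0, Matrix.le_iff]
  have he : algebraMap ℝ (Matrix (Fin P) (Fin P) ℂ) (1 - μ * ν) - (1 - (μ : ℂ) • G)
      = (μ : ℂ) • (G - (ν : ℂ) • (1 : Matrix (Fin P) (Fin P) ℂ)) := by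
    rw [Algebra.algebraMap_eq_smul_one, ← Complex.coe_smul]
    push_cast
    module
  rw [he]
  exact hlow.smul hμC

/-- Eigenvectors of `B`, written as one-column matrices. -/
lemma exists_col_of_mem_spectrum {M : ℕ} (B : Matrix (Fin M) (Fin M) ℂ) {l : ℂ}
    (hl : l ∈ spectrum ℂ B) :
    ∃ v : Matrix (Fin M) (Fin 1) ℂ, v ≠ 0 ∧ B * v = l • v := by
  rw [spectrum.mem_iff, Matrix.isUnit_iff_isUnit_det, isUnit_iff_ne_zero, not_not,
    ← Matrix.exists_mulVec_eq_zero_iff] at hl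
  obtain ⟨v, hv, hBv⟩ := hl
  refine ⟨Matrix.replicateCol (Fin 1) v, fun h => hv ?_, ?_⟩
  · ext i
    exact congrFun (congrFun h i) 0
  · rw [← Matrix.replicateCol_mulVec, ← Matrix.replicateCol_smul]
    congr 1
    rw [Matrix.sub_mulVec, Algebra.algebraMap_eq_smul_one, Matrix.smul_mulVec,
      Matrix.one_mulVec, sub_eq_zero] at hBv
    exact hBv.symm

lemma norm_le_one_of_conjTranspose_mul_self {M P : ℕ} (U : Matrix (Fin M) (Fin P) ℂ)
    (hUU : Uᴴ * U = 1) : ‖U‖ ≤ 1 := by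
  have h := Matrix.l2_opNorm_conjTranspose_mul_self U
  rw [hUU] at h
  have h1 : ‖(1 : Matrix (Fin P) (Fin P) ℂ)‖ ≤ 1 := by
    rcases subsingleton_or_nontrivial (Matrix (Fin P) (Fin P) ℂ) with hs | hn
    · rw [Subsingleton.elim (1 : Matrix (Fin P) (Fin P) ℂ) 0]; simp
    · exact CStarRing.norm_one.le
  nlinarith [norm_nonneg U]

/-- **Stability of the coefficient matrix `B`.**
Setting: `M ≥ P ≥ 1`; `U ∈ ℂ^{M×P}` has orthonormal columns (`UᴴU = I`), `A` satisfies
`AU = U`, `UᴴA = Uᴴ` and `ρ(A - UUᴴ) < 1`; `H` is Hermitian with `0 ≤ H ≤ δI` and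
`νI_P ≤ UᴴHU` for constants `0 < ν ≤ δ`.  Conclusion: there exists `μ₀ > 0` such that for
every `μ ∈ (0, μ₀)` the matrix `B_μ = A(I - μH)` has spectral radius `ρ(B_μ) < 1`. -/
theorem stability_of_coefficient_matrix_B
    {M P : ℕ} (hP : 1 ≤ P) (hPM : P ≤ M)
    (U : Matrix (Fin M) (Fin P) ℂ) (A H : Matrix (Fin M) (Fin M) ℂ)
    (ν δ : ℝ) (hν : 0 < ν) (hνδ : ν ≤ δ)
    (hUU : Uᴴ * U = 1)
    (hAU : A * U = U)
    (hUA : Uᴴ * A = Uᴴ)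
    (hρ : spectralRadius ℂ (A - U * Uᴴ) < 1)
    (hH0 : H.PosSemidef)
    (hHδ : ((δ : ℂ) • (1 : Matrix (Fin M) (Fin M) ℂ) - H).PosSemidef)
    (hHν : (Uᴴ * H * U - (ν : ℂ) • (1 : Matrix (Fin P) (Fin P) ℂ)).PosSemidef) :
    ∃ μ₀ : ℝ, 0 < μ₀ ∧ ∀ μ : ℝ, 0 < μ → μ < μ₀ →
      spectralRadius ℂ (A * (1 - (μ : ℂ) • H)) < 1 := by
  have hδ : 0 < δ := hν.trans_le hνδ
  obtain ⟨C, hC0, hC⟩ := exists_bound_inverse _ hρ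
  set K := A - U * Uᴴ with hK
  set D : ℝ := C * (‖K‖ * ‖H‖) with hD
  have hD0 : 0 ≤ D := by positivity
  have hUn : ‖U‖ ≤ 1 := norm_le_one_of_conjTranspose_mul_self U hUU
  have hUHn : ‖Uᴴ‖ ≤ 1 := by rwa [Matrix.l2_opNorm_conjTranspose]
  have hUK : Uᴴ * K = 0 := by
    rw [hK, Matrix.mul_sub, hUA, ← Matrix.mul_assoc, hUU, Matrix.one_mul, sub_self]
  have hKU : K * U = 0 := by
    rw [hK, Matrix.sub_mul, hAU, Matrix.mul_assoc, hUU, Matrix.mul_one, sub_self]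
  have hGδ : ((δ : ℂ) • (1 : Matrix (Fin P) (Fin P) ℂ) - Uᴴ * H * U).PosSemidef := by
    have h := hHδ.conjTranspose_mul_mul_same U
    rwa [Matrix.mul_sub, Matrix.sub_mul, Matrix.mul_smul, Matrix.smul_mul, Matrix.mul_one,
      hUU] at h
  -- The three bounds make `1 - μ UᴴHU` nonnegative, give `μ D ≤ 1/2`, and `2 μ ‖H‖ D < ν`.
  refine ⟨min (1 / δ) (min (1 / (2 * D + 1)) (ν / (2 * (‖H‖ * D) + 1))), by positivity, ?_⟩
  intro μ hμ hμlt
  rw [lt_min_iff, lt_min_iff, lt_div_iff₀ hδ, lt_div_iff₀ (by positivity),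
    lt_div_iff₀ (by positivity)] at hμlt
  obtain ⟨hb1, hb2, hb3⟩ := hμlt
  have hGn := norm_one_sub_smul_le _ ν δ μ hHν hGδ hμ.le hνδ hb1.le
  have : Nonempty (Fin M) := ⟨⟨0, by omega⟩⟩
  have hkey : ∀ l ∈ spectrum ℂ (A * (1 - (μ : ℂ) • H)), ‖l‖ < 1 := by
    intro l hl
    by_contra! hl1
    have hl0 : l ≠ 0 := norm_pos_iff.1 (by linarith)
    obtain ⟨v, hv0, hv⟩ := exists_col_of_mem_spectrum _ hl
    obtain ⟨R, hRC, hR⟩ := hC l⁻¹ (by rw [norm_inv]; exact inv_le_one_of_one_le₀ hl1)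
    obtain ⟨a, ha⟩ : ∃ a, a = Uᴴ * v := ⟨_, rfl⟩
    obtain ⟨w, hw⟩ : ∃ w, w = v - U * a := ⟨_, rfl⟩
    have hvw : v = U * a + w := by rw [hw]; abel
    -- The component of the eigenvalue equation along the range of `U`.
    have e1 : l • a = (1 - (μ : ℂ) • (Uᴴ * H * U)) * a - (μ : ℂ) • (Uᴴ * (H * w)) := by
      have h := congrArg (fun x => Uᴴ * x) hv
      simp only [← Matrix.mul_assoc, hUA, Matrix.mul_smul] at h
      rw [← ha] at h
      rw [← h, hw, Matrix.mul_sub, Matrix.sub_mul, Matrix.sub_mul, Matrix.mul_one, ← ha]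
      simp only [Matrix.mul_sub, Matrix.one_mul, Matrix.mul_smul, Matrix.smul_mul, smul_sub,
        Matrix.mul_assoc]
      abel
    -- The complementary component.
    have e2 : l • w = K * w - (μ : ℂ) • (K * (H * v)) := by
      have hKv : K * v = K * w := by
        rw [hvw, Matrix.mul_add, ← Matrix.mul_assoc, hKU, Matrix.zero_mul, zero_add]
      have hA : A = K + U * Uᴴ := by rw [hK]; abel
      have h1 : l • a = a - (μ : ℂ) • (Uᴴ * (H * v)) := by
        have h := congrArg (fun x => Uᴴ * x) hv
        simp only [← Matrix.mul_assoc, hUA, Matrix.mul_smul] at h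
        rw [← ha] at h
        rw [← h, Matrix.mul_sub, Matrix.sub_mul, Matrix.mul_one, ← ha]
        simp only [Matrix.mul_smul, Matrix.smul_mul, Matrix.mul_assoc]
      rw [← hKv, hw, smul_sub, ← hv, ← Matrix.mul_smul, h1, hA]
      simp only [Matrix.mul_sub, Matrix.sub_mul, Matrix.add_mul, Matrix.mul_one,
        Matrix.mul_smul, Matrix.smul_mul, Matrix.mul_assoc, ha, smul_add]
      abel
    have hwn : ‖w‖ ≤ μ * D * ‖v‖ := by
      have e3 : (1 - l⁻¹ • K) * w = -((l⁻¹ * μ) • (K * (H * v))) := by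
        have h : l⁻¹ • (l • w) = w := by rw [smul_smul, inv_mul_cancel₀ hl0, one_smul]
        rw [Matrix.sub_mul, Matrix.one_mul, Matrix.smul_mul]
        nth_rewrite 1 [← h]
        rw [e2, smul_sub, smul_smul]
        abel
      have e4 : w = -((l⁻¹ * μ) • (R * (K * (H * v)))) := by
        calc w = R * ((1 - l⁻¹ • K) * w) := by rw [← Matrix.mul_assoc, hR, Matrix.one_mul]
          _ = _ := by rw [e3, Matrix.mul_neg, Matrix.mul_smul]
      have h1 : ‖R * (K * (H * v))‖ ≤ C * (‖K‖ * (‖H‖ * ‖v‖)) := by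
        refine (Matrix.l2_opNorm_mul _ _).trans ?_
        gcongr
        refine (Matrix.l2_opNorm_mul _ _).trans ?_
        gcongr
        exact Matrix.l2_opNorm_mul _ _
      have h2 : ‖l⁻¹ * (μ : ℂ)‖ ≤ μ := by
        rw [norm_mul, norm_inv, Complex.norm_real, Real.norm_of_nonneg hμ.le]
        exact mul_le_of_le_one_left hμ.le (inv_le_one_of_one_le₀ hl1)
      calc ‖w‖ = ‖l⁻¹ * (μ : ℂ)‖ * ‖R * (K * (H * v))‖ := by
            conv_lhs => rw [e4]
            rw [norm_neg, norm_smul]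
        _ ≤ μ * (C * (‖K‖ * (‖H‖ * ‖v‖))) := by gcongr
        _ = _ := by rw [hD]; ring
    have hvn : ‖v‖ ≤ ‖a‖ + ‖w‖ := by
      calc ‖v‖ = ‖U * a + w‖ := by rw [← hvw]
        _ ≤ ‖U * a‖ + ‖w‖ := norm_add_le _ _
        _ ≤ ‖U‖ * ‖a‖ + ‖w‖ := by gcongr; exact Matrix.l2_opNorm_mul _ _
        _ ≤ ‖a‖ + ‖w‖ := by nlinarith [norm_nonneg a]
    have hvpos : 0 < ‖v‖ := norm_pos_iff.2 hv0
    have hv2 : ‖v‖ ≤ 2 * ‖a‖ := by nlinarith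
    have hapos : 0 < ‖a‖ := by linarith
    have hw2 : ‖w‖ ≤ μ * D * (2 * ‖a‖) := hwn.trans (by gcongr)
    have hUHw : ‖Uᴴ * (H * w)‖ ≤ ‖H‖ * ‖w‖ := by
      calc _ ≤ ‖Uᴴ‖ * ‖H * w‖ := Matrix.l2_opNorm_mul _ _
        _ ≤ 1 * (‖H‖ * ‖w‖) := by gcongr; exact Matrix.l2_opNorm_mul _ _
        _ = _ := one_mul _
    have hfin : ‖a‖ ≤ (1 - μ * ν) * ‖a‖ + μ * (‖H‖ * (μ * D * (2 * ‖a‖))) := by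
      calc ‖a‖ ≤ ‖l‖ * ‖a‖ := le_mul_of_one_le_left hapos.le hl1
        _ = ‖l • a‖ := (norm_smul _ _).symm
        _ ≤ ‖(1 - (μ : ℂ) • (Uᴴ * H * U)) * a‖ + ‖(μ : ℂ) • (Uᴴ * (H * w))‖ := by
          rw [e1]; exact norm_sub_le _ _
        _ ≤ (1 - μ * ν) * ‖a‖ + μ * (‖H‖ * (μ * D * (2 * ‖a‖))) := by
          rw [norm_smul, Complex.norm_real, Real.norm_of_nonneg hμ.le]
          refine add_le_add ((Matrix.l2_opNorm_mul _ _).trans (by gcongr)) ?_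
          gcongr
          exact hUHw.trans (by gcongr)
    have hμa : 0 < μ * ‖a‖ := mul_pos hμ hapos
    have h1 : μ * ‖a‖ * ν ≤ μ * ‖a‖ * (μ * (2 * (‖H‖ * D))) := by linarith
    have h2 := le_of_mul_le_mul_left h1 hμa
    linarith
  have h := spectrum.spectralRadius_lt_of_forall_lt_of_nonempty
    (spectrum.nonempty (A * (1 - (μ : ℂ) • H))) (r := 1)
    (fun l hl => by exact_mod_cast hkey l hl)
  simpa using h
end

section
/- Order of the resolvent (I − B)^{-1}. There exist constants μ₀ > 0 and C > 0 such that for every μ ∈ (0, μ₀), the matrix I_M − B_μ is invertible and ‖(I_M − B_μ)^{-1}‖ ≤ C/μ, where B_μ = A(I_M − μH). -/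
/-!
Write `p = U Uᴴ`, `q = 1 - p` and `X μ = 1 - A (1 - μ H)`. Since `A p = p`, the factor `μ` can be
pulled out of `X μ` by rescaling the complement of the range of `U`:
`X μ * (μ q + p) = μ * G μ` with `G μ = 1 - A + A H p + μ A H q`.

The limit `G 0 = 1 - A + A H p` is invertible (`isUnit_limit`). Hence `μ ↦ (μ q + p) (G μ)⁻¹` is
continuous at `0`, so bounded near `0`, and `(X μ)⁻¹` is `μ⁻¹` times that function.
-/

open Matrix
open scoped ComplexOrder

theorem cSpecNorm_smul {n : Type*} [Fintype n] [DecidableEq n] (c : ℂ) (X : Matrix n n ℂ) :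
    cSpecNorm (c • X) = ‖c‖ * cSpecNorm X := by
  simp only [cSpecNorm, map_smul, norm_smul]

theorem continuous_cSpecNorm {n : Type*} [Fintype n] [DecidableEq n] :
    Continuous (cSpecNorm : Matrix n n ℂ → ℝ) :=
  (LinearMap.continuous_of_finiteDimensional
    ((Matrix.toEuclideanCLM (𝕜 := ℂ) (n := n)).toAlgEquiv.toLinearMap)).norm

/-- A vector `v` killed by `1 - A + A H U Uᴴ` satisfies `Uᴴ H U (Uᴴ v) = 0`, because `Uᴴ A = Uᴴ`;
coercivity of `Uᴴ H U` gives `Uᴴ v = 0`, and then `v` is killed by `1 - (A - U Uᴴ)`, which is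
invertible because `A - U Uᴴ` has spectral radius below one. -/
theorem isUnit_limit {M P : ℕ} (U : Matrix (Fin M) (Fin P) ℂ) (A H : Matrix (Fin M) (Fin M) ℂ)
    (ν : ℝ) (hν : 0 < ν)
    (hUA : Uᴴ * A = Uᴴ)
    (hρ : spectralRadius ℂ (A - U * Uᴴ) < 1)
    (hHν : (Uᴴ * H * U - (ν : ℂ) • (1 : Matrix (Fin P) (Fin P) ℂ)).PosSemidef) :
    IsUnit (1 - A + A * H * (U * Uᴴ)) := by
  have hZ : IsUnit (1 - (A - U * Uᴴ)) := by
    have h1 : (1 : ℂ) ∈ resolventSet ℂ (A - U * Uᴴ) :=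
      spectrum.mem_resolventSet_of_spectralRadius_lt (by simpa using hρ)
    simpa [spectrum.mem_resolventSet_iff] using h1
  have hK : IsUnit (Uᴴ * H * U) := by
    have hpd : ((ν : ℂ) • (1 : Matrix (Fin P) (Fin P) ℂ)).PosDef :=
      Matrix.PosDef.one.smul (by exact_mod_cast hν)
    have := (hpd.add_posSemidef hHν).isUnit
    simpa using this
  rw [Matrix.isUnit_iff_isUnit_det, isUnit_iff_ne_zero]
  intro h0
  obtain ⟨v, hv, hv0⟩ := Matrix.exists_mulVec_eq_zero_iff.2 h0
  have hw : Uᴴ *ᵥ v = 0 := by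
    refine Matrix.mulVec_injective_of_isUnit hK ?_
    have e : Uᴴ * H * U * Uᴴ = Uᴴ * (1 - A + A * H * (U * Uᴴ)) := by
      rw [Matrix.mul_add, Matrix.mul_sub, Matrix.mul_one, hUA, sub_self, zero_add]
      simp only [← Matrix.mul_assoc, hUA]
    change (Uᴴ * H * U) *ᵥ (Uᴴ *ᵥ v) = (Uᴴ * H * U) *ᵥ 0
    rw [Matrix.mulVec_mulVec, e, ← Matrix.mulVec_mulVec, hv0, Matrix.mulVec_zero,
      Matrix.mulVec_zero]
  refine hv (Matrix.mulVec_injective_of_isUnit hZ ?_)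
  have hpv : (U * Uᴴ) *ᵥ v = 0 := by rw [← Matrix.mulVec_mulVec, hw, Matrix.mulVec_zero]
  have hAv : (1 - A) *ᵥ v = 0 := by
    simpa [Matrix.add_mulVec, ← Matrix.mulVec_mulVec, hw] using hv0
  change (1 - (A - U * Uᴴ)) *ᵥ v = (1 - (A - U * Uᴴ)) *ᵥ 0
  rw [← sub_add, Matrix.add_mulVec, hAv, hpv, add_zero, Matrix.mulVec_zero]

/-- **Order of the resolvent `(I − B)⁻¹`.**
Setting: `M ≥ P ≥ 1`; `U ∈ ℂ^{M×P}` has orthonormal columns, `A` satisfies `AU = U`,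
`UᴴA = Uᴴ` and `ρ(A - UUᴴ) < 1`; `H` is Hermitian with `0 ≤ H ≤ δI` and `νI_P ≤ UᴴHU`,
`0 < ν ≤ δ`.  Conclusion: there exist `μ₀ > 0` and `C > 0` such that for every
`μ ∈ (0, μ₀)`, the matrix `I - B_μ` (with `B_μ = A(I - μH)`) is invertible and
`‖(I - B_μ)⁻¹‖ ≤ C/μ` in the spectral norm. -/
theorem order_of_resolvent_I_sub_B
    {M P : ℕ} (hP : 1 ≤ P) (hPM : P ≤ M)
    (U : Matrix (Fin M) (Fin P) ℂ) (A H : Matrix (Fin M) (Fin M) ℂ)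
    (ν δ : ℝ) (hν : 0 < ν) (hνδ : ν ≤ δ)
    (hUU : Uᴴ * U = 1)
    (hAU : A * U = U)
    (hUA : Uᴴ * A = Uᴴ)
    (hρ : spectralRadius ℂ (A - U * Uᴴ) < 1)
    (hH0 : H.PosSemidef)
    (hHδ : ((δ : ℂ) • (1 : Matrix (Fin M) (Fin M) ℂ) - H).PosSemidef)
    (hHν : (Uᴴ * H * U - (ν : ℂ) • (1 : Matrix (Fin P) (Fin P) ℂ)).PosSemidef) :
    ∃ μ₀ : ℝ, 0 < μ₀ ∧ ∃ C : ℝ, 0 < C ∧ ∀ μ : ℝ, 0 < μ → μ < μ₀ →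
      IsUnit (1 - A * (1 - (μ : ℂ) • H)) ∧
      cSpecNorm (1 - A * (1 - (μ : ℂ) • H))⁻¹ ≤ C / μ := by
  set p := U * Uᴴ with hp
  have hAp : A * p = p := by rw [hp, ← Matrix.mul_assoc, hAU]
  have hpp : p * p = p := by
    rw [hp, Matrix.mul_assoc, ← Matrix.mul_assoc Uᴴ, hUU, Matrix.one_mul]
  let G : ℝ → Matrix (Fin M) (Fin M) ℂ :=
    fun μ => 1 - A + A * H * p + (μ : ℂ) • (A * H * (1 - p))
  let S : ℝ → Matrix (Fin M) (Fin M) ℂ := fun μ => (μ : ℂ) • (1 - p) + p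
  have hG0 : (G 0).det ≠ 0 := by
    have := isUnit_limit U A H ν hν hUA hρ hHν
    rw [Matrix.isUnit_iff_isUnit_det] at this
    simpa [G, hp] using this.ne_zero
  have hGc : Continuous G := by fun_prop
  have hSc : Continuous S := by fun_prop
  have hdet : ∀ᶠ μ in nhds (0 : ℝ), (G μ).det ≠ 0 :=
    hGc.matrix_det.continuousAt.eventually_ne hG0
  have hFc : ContinuousAt (fun μ => cSpecNorm (S μ * (G μ)⁻¹)) 0 := by
    refine continuous_cSpecNorm.continuousAt.comp ?_
    have hinv : ContinuousAt (fun μ => (G μ)⁻¹) 0 := by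
      simp only [Matrix.inv_def, Ring.inverse_eq_inv']
      exact (hGc.matrix_det.continuousAt.inv₀ hG0).smul hGc.matrix_adjugate.continuousAt
    exact hSc.continuousAt.mul hinv
  have hbd := hFc.eventually_lt_const (lt_add_one _)
  obtain ⟨μ₀, hμ₀, hball⟩ := Metric.eventually_nhds_iff.1 (hdet.and hbd)
  have hC : 0 ≤ cSpecNorm (S 0 * (G 0)⁻¹) := norm_nonneg _
  refine ⟨μ₀, hμ₀, cSpecNorm (S 0 * (G 0)⁻¹) + 1, by positivity, fun μ hμ hμlt => ?_⟩
  obtain ⟨hd, hlt⟩ := hball (y := μ) (by simpa [abs_of_pos hμ] using hμlt)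
  have hμc : (μ : ℂ) ≠ 0 := by exact_mod_cast hμ.ne'
  have hXS : (1 - A * (1 - (μ : ℂ) • H)) * S μ = (μ : ℂ) • G μ := by
    have e1 : (1 - A) * p = 0 := by rw [sub_mul, one_mul, hAp, sub_self]
    have e2 : (1 - p) * p = 0 := by rw [sub_mul, one_mul, hpp, sub_self]
    have e3 : (1 - A) * (1 - p) = 1 - A := by rw [mul_sub, e1, mul_one, sub_zero]
    have e4 : 1 - A * (1 - (μ : ℂ) • H) = (1 - A) + (μ : ℂ) • (A * H) := by
      rw [mul_sub, mul_one, mul_smul_comm]; abel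
    simp only [e4, S, G, mul_add, add_mul, mul_smul_comm, smul_mul_assoc, e1, e3, smul_add]
    abel
  have hmul : (1 - A * (1 - (μ : ℂ) • H)) * ((μ : ℂ)⁻¹ • (S μ * (G μ)⁻¹)) = 1 := by
    rw [mul_smul_comm, ← mul_assoc, hXS, smul_mul_assoc, smul_smul, inv_mul_cancel₀ hμc, one_smul,
      Matrix.mul_nonsing_inv _ (isUnit_iff_ne_zero.2 hd)]
  refine ⟨IsUnit.of_mul_eq_one _ hmul, ?_⟩
  rw [Matrix.inv_eq_right_inv hmul, cSpecNorm_smul, norm_inv, Complex.norm_real,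
    Real.norm_of_nonneg hμ.le, div_eq_inv_mul]
  gcongr
end

section
/- Characterization of the projection onto an intersection (Lemma 3). Let Ω₁ ⊆ E be a nonempty closed affine subset (i.e., (1−α)x + αy ∈ Ω₁ for all x, y ∈ Ω₁ and all α ∈ ℝ) and let Ω₂ ⊆ E be a nonempty closed convex subset. Fix C ∈ E and let Z = Π_{Ω₂}(Π_{Ω₁}(C)). If Z ∈ Ω₁, then Ω₁ ∩ Ω₂ is nonempty and Π_{Ω₁ ∩ Ω₂}(C) = Z. -/
/-!
On the affine set `Ω₁` the residual `C - Y` is orthogonal to every direction `A - Y`, so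
Pythagoras gives `‖C - A‖² = ‖C - Y‖² + ‖Y - A‖²` for all `A ∈ Ω₁` (`pythagoras_of_affine`).
Hence over `Ω₁ ∩ Ω₂` minimizing the distance to `C` is the same as minimizing the distance to
`Y`. The point `Z` does the latter over all of `Ω₂`, and it is the only point of `Ω₂` to do so,
by the parallelogram law applied to a midpoint.
-/

/-- Pythagoras for the projection `Y` of `C` onto an affine set. -/
lemma pythagoras_of_affine {E : Type*} [NormedAddCommGroup E] [InnerProductSpace ℝ E]
    {S : Set E} (haff : ∀ x ∈ S, ∀ y ∈ S, ∀ α : ℝ, (1 - α) • x + α • y ∈ S)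
    {C Y : E} (hYS : Y ∈ S) (hY : ∀ A ∈ S, ‖C - Y‖ ≤ ‖C - A‖) {A : E} (hA : A ∈ S) :
    ‖C - A‖ ^ 2 = ‖C - Y‖ ^ 2 + ‖Y - A‖ ^ 2 := by
  have key : ∀ t : ℝ, 0 ≤ 2 * t * inner ℝ (C - Y) (Y - A) + t ^ 2 * ‖Y - A‖ ^ 2 := by
    intro t
    have h := pow_le_pow_left₀ (norm_nonneg _) (hY _ (haff Y hYS A hA t)) 2
    have e : C - ((1 - t) • Y + t • A) = (C - Y) + t • (Y - A) := by module
    rw [e, norm_add_sq_real, inner_smul_right, norm_smul, mul_pow, Real.norm_eq_abs,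
      sq_abs] at h
    linarith
  have orth : inner ℝ (C - Y) (Y - A) = 0 := by
    set p := inner ℝ (C - Y) (Y - A)
    set D := ‖Y - A‖ ^ 2
    have hD : 0 ≤ D := sq_nonneg _
    -- The `+ 1` makes this near-optimal step meaningful even when `A = Y`.
    have h := key (-p / (D + 1))
    have e : 2 * (-p / (D + 1)) * p + (-p / (D + 1)) ^ 2 * D
        = -(p ^ 2 * (D + 2)) / (D + 1) ^ 2 := by
      field_simp
      ring
    rw [e, le_div_iff₀ (by positivity)] at h
    have hp : p ^ 2 = 0 := by nlinarith [sq_nonneg p, mul_nonneg (sq_nonneg p) hD]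
    exact pow_eq_zero_iff two_ne_zero |>.mp hp
  have e : C - A = (C - Y) + (Y - A) := by abel
  rw [e, norm_add_sq_real, orth]
  ring

/-- **Characterization of the projection onto an intersection (Lemma 3).**
Let `E` be a real Hilbert space, `Ω₁ ⊆ E` a nonempty closed affine subset, and `Ω₂ ⊆ E` a
nonempty closed convex subset.  Fix `C ∈ E`, let `Y = Π_{Ω₁}(C)` and `Z = Π_{Ω₂}(Y)`
(metric projections, encoded as the distance minimizers over the corresponding sets).
If `Z ∈ Ω₁`, then `Ω₁ ∩ Ω₂` is nonempty and `Π_{Ω₁ ∩ Ω₂}(C) = Z`, i.e. `Z` lies in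
`Ω₁ ∩ Ω₂`, minimizes the distance to `C` over `Ω₁ ∩ Ω₂`, and is the unique such
minimizer. -/
theorem projection_onto_intersection_characterization
    {E : Type*} [NormedAddCommGroup E] [InnerProductSpace ℝ E] [CompleteSpace E]
    (Ω₁ Ω₂ : Set E)
    (h1ne : Ω₁.Nonempty) (h1closed : IsClosed Ω₁)
    (h1aff : ∀ x ∈ Ω₁, ∀ y ∈ Ω₁, ∀ α : ℝ, (1 - α) • x + α • y ∈ Ω₁)
    (h2ne : Ω₂.Nonempty) (h2closed : IsClosed Ω₂) (h2conv : Convex ℝ Ω₂)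
    (C Y Z : E)
    (hY : Y ∈ Ω₁ ∧ ∀ A ∈ Ω₁, ‖C - Y‖ ≤ ‖C - A‖)
    (hZ : Z ∈ Ω₂ ∧ ∀ A ∈ Ω₂, ‖Y - Z‖ ≤ ‖Y - A‖)
    (hZ1 : Z ∈ Ω₁) :
    (Ω₁ ∩ Ω₂).Nonempty ∧
    Z ∈ Ω₁ ∩ Ω₂ ∧
    (∀ A ∈ Ω₁ ∩ Ω₂, ‖C - Z‖ ≤ ‖C - A‖) ∧
    (∀ Z' ∈ Ω₁ ∩ Ω₂, (∀ A ∈ Ω₁ ∩ Ω₂, ‖C - Z'‖ ≤ ‖C - A‖) → Z' = Z) := by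
  have pyth {A : E} (hA : A ∈ Ω₁) := pythagoras_of_affine h1aff hY.1 hY.2 hA
  refine ⟨⟨Z, hZ1, hZ.1⟩, ⟨hZ1, hZ.1⟩, ?_, ?_⟩
  · rintro A ⟨hA1, hA2⟩
    have h := pow_le_pow_left₀ (norm_nonneg _) (hZ.2 A hA2) 2
    refine le_of_pow_le_pow_left₀ two_ne_zero (norm_nonneg _) ?_
    rw [pyth hZ1, pyth hA1]
    linarith
  · rintro Z' ⟨hZ'1, hZ'2⟩ hmin
    have h := pow_le_pow_left₀ (norm_nonneg _) (hmin Z ⟨hZ1, hZ.1⟩) 2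
    rw [pyth hZ1, pyth hZ'1] at h
    have hmid : (1 / 2 : ℝ) • Z + (1 / 2 : ℝ) • Z' ∈ Ω₂ :=
      h2conv hZ.1 hZ'2 (by norm_num) (by norm_num) (by norm_num)
    have hm := pow_le_pow_left₀ (norm_nonneg _) (hZ.2 _ hmid) 2
    have e : Y - ((1 / 2 : ℝ) • Z + (1 / 2 : ℝ) • Z')
        = (1 / 2 : ℝ) • ((Y - Z) + (Y - Z')) := by module
    have e' : (Y - Z) - (Y - Z') = Z' - Z := by abel
    have par := parallelogram_law_with_norm ℝ (Y - Z) (Y - Z')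
    rw [e, norm_smul, mul_pow] at hm
    rw [e'] at par
    norm_num at hm
    have h0 : ‖Z' - Z‖ ^ 2 = 0 := by nlinarith [sq_nonneg ‖Z' - Z‖]
    exact sub_eq_zero.mp (norm_eq_zero.mp (pow_eq_zero_iff two_ne_zero |>.mp h0))
end

section
/- Explicit projection onto Ω₁. For every D ∈ ℝ^{M×M}, the matrix A° = (I_M − P_U)((D + Dᵀ)/2)(I_M − P_U) + P_U belongs to Ω₁ and is the unique minimizer of the Frobenius norm ‖A − D‖_F over all A ∈ Ω₁; that is, the Frobenius-norm projection of D onto Ω₁ equals (I − P_U)((D + Dᵀ)/2)(I − P_U) + P_U. -/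
/-!
Write `Q = 1 - U Uᵀ`, `S = (D + Dᵀ)/2` and `B = Q S Q + U Uᵀ`. For `A ∈ Ω₁` the difference
`H = A - B` is symmetric with `H U = 0`, hence `H Q = Q H = H`. Therefore
`tr (H B) = tr (H S Q) = tr (Q H S) = tr (H S) = tr (H D)`, the last step by symmetry of `H`;
so `H` is orthogonal to `B - D`. Pythagoras then gives
`‖A - D‖² = ‖A - B‖² + ‖B - D‖²`, from which minimality and uniqueness follow.
-/

open Matrix

/-- The Frobenius norm `‖X‖_F = √Tr(XᵀX)` of a real square matrix. -/
noncomputable def frobNorm {M : ℕ} (X : Matrix (Fin M) (Fin M) ℝ) : ℝ :=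
  Real.sqrt ((Xᵀ * X).trace)

theorem trace_transpose_mul_self_nonneg {M : ℕ} (X : Matrix (Fin M) (Fin M) ℝ) :
    0 ≤ (Xᵀ * X).trace := by
  simpa using (Matrix.posSemidef_conjTranspose_mul_self X).trace_nonneg

/-- `Ω₁`-directions (symmetric `H` with `H U = 0`) are orthogonal to the residual `B - D`. -/
theorem trace_mul_residual_eq_zero {M P : ℕ} (U : Matrix (Fin M) (Fin P) ℝ)
    (D H : Matrix (Fin M) (Fin M) ℝ) (hHU : H * U = 0) (hH : Hᵀ = H) :
    (H * ((1 - U * Uᵀ) * ((2 : ℝ)⁻¹ • (D + Dᵀ)) * (1 - U * Uᵀ) + U * Uᵀ - D)).trace = 0 := by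
  have hUH : Uᵀ * H = 0 := by
    simpa [Matrix.transpose_mul, hH] using congrArg Matrix.transpose hHU
  have hHQ : H * (1 - U * Uᵀ) = H := by
    rw [Matrix.mul_sub, ← Matrix.mul_assoc, hHU]; simp
  have hQH : (1 - U * Uᵀ) * H = H := by
    rw [Matrix.sub_mul, Matrix.mul_assoc, hUH]; simp
  have hDt : (H * Dᵀ).trace = (H * D).trace := by
    rw [← Matrix.trace_transpose, Matrix.transpose_mul, Matrix.transpose_transpose, hH,
      Matrix.trace_mul_comm]
  have e : H * ((1 - U * Uᵀ) * ((2 : ℝ)⁻¹ • (D + Dᵀ)) * (1 - U * Uᵀ) + U * Uᵀ - D)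
      = H * ((2 : ℝ)⁻¹ • (D + Dᵀ)) * (1 - U * Uᵀ) - H * D := by
    rw [Matrix.mul_sub, Matrix.mul_add, ← Matrix.mul_assoc H U, hHU, ← Matrix.mul_assoc,
      ← Matrix.mul_assoc, hHQ]
    simp
  rw [e, Matrix.trace_sub, Matrix.trace_mul_comm, ← Matrix.mul_assoc, hQH, Matrix.mul_smul,
    Matrix.trace_smul, Matrix.mul_add, Matrix.trace_add, hDt, smul_eq_mul]
  ring

/-- **Explicit projection onto `Ω₁ = {A : AU = U, A = Aᵀ}`.**
`U ∈ ℝ^{M×P}` has orthonormal columns and `P_U = UUᵀ`.  For every `D ∈ ℝ^{M×M}`, the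
matrix `A° = (I - P_U)((D + Dᵀ)/2)(I - P_U) + P_U` belongs to `Ω₁` and is the unique
minimizer of the Frobenius norm `‖A - D‖_F` over all `A ∈ Ω₁`. -/
theorem projection_onto_Omega1
    {M P : ℕ} (U : Matrix (Fin M) (Fin P) ℝ) (hU : Uᵀ * U = 1)
    (D : Matrix (Fin M) (Fin M) ℝ) :
    ((1 - U * Uᵀ) * ((2 : ℝ)⁻¹ • (D + Dᵀ)) * (1 - U * Uᵀ) + U * Uᵀ) * U = U ∧
    (1 - U * Uᵀ) * ((2 : ℝ)⁻¹ • (D + Dᵀ)) * (1 - U * Uᵀ) + U * Uᵀ =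
      ((1 - U * Uᵀ) * ((2 : ℝ)⁻¹ • (D + Dᵀ)) * (1 - U * Uᵀ) + U * Uᵀ)ᵀ ∧
    ∀ A : Matrix (Fin M) (Fin M) ℝ, A * U = U → A = Aᵀ →
      frobNorm (((1 - U * Uᵀ) * ((2 : ℝ)⁻¹ • (D + Dᵀ)) * (1 - U * Uᵀ) + U * Uᵀ) - D) ≤
        frobNorm (A - D) ∧
      (frobNorm (A - D) =
          frobNorm (((1 - U * Uᵀ) * ((2 : ℝ)⁻¹ • (D + Dᵀ)) * (1 - U * Uᵀ) + U * Uᵀ) - D) →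
        A = (1 - U * Uᵀ) * ((2 : ℝ)⁻¹ • (D + Dᵀ)) * (1 - U * Uᵀ) + U * Uᵀ) := by
  have h1 : ((1 - U * Uᵀ) * ((2 : ℝ)⁻¹ • (D + Dᵀ)) * (1 - U * Uᵀ) + U * Uᵀ) * U = U := by
    have hQU : (1 - U * Uᵀ) * U = 0 := by
      rw [Matrix.sub_mul, Matrix.mul_assoc, hU]; simp
    rw [Matrix.add_mul, Matrix.mul_assoc, hQU, Matrix.mul_assoc U, hU]; simp
  have h2 : (1 - U * Uᵀ) * ((2 : ℝ)⁻¹ • (D + Dᵀ)) * (1 - U * Uᵀ) + U * Uᵀ =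
      ((1 - U * Uᵀ) * ((2 : ℝ)⁻¹ • (D + Dᵀ)) * (1 - U * Uᵀ) + U * Uᵀ)ᵀ := by
    simp only [Matrix.transpose_add, Matrix.transpose_mul, Matrix.transpose_sub,
      Matrix.transpose_smul, Matrix.transpose_one, Matrix.transpose_transpose,
      Matrix.mul_assoc, add_comm]
  refine ⟨h1, h2, fun A hAU hA => ?_⟩
  have h3 := fun H => trace_mul_residual_eq_zero U D H
  generalize (1 - U * Uᵀ) * ((2 : ℝ)⁻¹ • (D + Dᵀ)) * (1 - U * Uᵀ) + U * Uᵀ = B at *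
  have hH : (A - B)ᵀ = A - B := by rw [Matrix.transpose_sub, ← hA, ← h2]
  have horth : ((A - B) * (B - D)).trace = 0 :=
    h3 _ (by rw [Matrix.sub_mul, hAU, h1, sub_self]) hH
  have horth' : ((B - D)ᵀ * (A - B)).trace = 0 := by
    rw [← Matrix.trace_transpose, Matrix.transpose_mul, Matrix.transpose_transpose, hH, horth]
  have hpyth : ((A - D)ᵀ * (A - D)).trace =
      ((A - B)ᵀ * (A - B)).trace + ((B - D)ᵀ * (B - D)).trace := by
    rw [← sub_add_sub_cancel A B D, Matrix.transpose_add, Matrix.add_mul, Matrix.mul_add,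
      Matrix.mul_add, Matrix.trace_add, Matrix.trace_add, Matrix.trace_add, horth',
      hH, horth]
    ring
  have hnn := trace_transpose_mul_self_nonneg (A - B)
  unfold frobNorm
  refine ⟨Real.sqrt_le_sqrt (by linarith), fun h => ?_⟩
  rw [Real.sqrt_inj (trace_transpose_mul_self_nonneg _) (trace_transpose_mul_self_nonneg _)] at h
  have h0 : ((A - B)ᴴ * (A - B)).trace = 0 := by
    rw [Matrix.conjTranspose_eq_transpose_of_trivial]; linarith
  exact sub_eq_zero.mp (Matrix.trace_conjTranspose_mul_self_eq_zero_iff.mp h0)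
end

section
/- Spectral clamping is the Frobenius projection onto a spectral-norm ball. Let C ∈ ℝ^{M×M} be symmetric with spectral decomposition C = Σ_{m=1}^M λ_m v_m v_mᵀ, where {v_m} is an orthonormal basis of eigenvectors with eigenvalues {λ_m}. For r > 0, the matrix Y = Σ_{m=1}^M clamp_r(λ_m) v_m v_mᵀ satisfies ‖Y‖ ≤ r and ‖Y − C‖_F ≤ ‖X − C‖_F for every X ∈ ℝ^{M×M} with ‖X‖ ≤ r, with equality only when X = Y; i.e., Y is the unique Frobenius-norm projection of C onto the ball {X : ‖X‖ ≤ r}. -/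
/-!
The inequality is the variational characterisation of the projection onto a convex set.
Write `Y` for the clamped matrix, `E = Y - C` and `D = X - Y`. Then
`‖X - C‖_F² = ‖D‖_F² + 2 Tr(EᵀD) + ‖E‖_F²`, and since `E` is diagonal in the basis `v`,
`Tr(EᵀD) = ∑ₘ (clamp_r(λₘ) - λₘ) (vₘ ⬝ X vₘ - clamp_r(λₘ))`. Each `vₘ ⬝ X vₘ` lies in `[-r, r]`
because `‖X‖ ≤ r`, and `clamp_r(λₘ)` is the projection of `λₘ` onto that interval, so every term
is nonnegative. Hence `‖X - C‖_F² ≥ ‖E‖_F² + ‖D‖_F²`, which gives minimality and uniqueness.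
The bound `‖Y‖ ≤ r` follows from `Y = Vᵀ diag(clamp_r(λ)) V` with `V` orthogonal.
-/

open Matrix

/-- The spectral (operator `ℓ²`-) norm of a real square matrix. -/
noncomputable def specNormR {M : ℕ} (X : Matrix (Fin M) (Fin M) ℝ) : ℝ :=
  ‖Matrix.toEuclideanCLM (𝕜 := ℝ) X‖

/-- `clamp_r(λ) = min (max λ (-r)) r`. -/
def clamp (r lam : ℝ) : ℝ := min (max lam (-r)) r

lemma abs_clamp_le {r : ℝ} (hr : 0 < r) (l : ℝ) : |clamp r l| ≤ r := by
  unfold clamp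
  rw [abs_le]
  exact ⟨le_min (le_max_right _ _) (by linarith), min_le_right _ _⟩

/-- Variational inequality for the projection of `l` onto `[-r, r]`. -/
lemma clamp_variational {r : ℝ} (l q : ℝ) (hq : |q| ≤ r) :
    0 ≤ (clamp r l - l) * (q - clamp r l) := by
  obtain ⟨h1, h2⟩ := abs_le.mp hq
  unfold clamp
  rcases le_total l (-r) with h | h
  · rw [max_eq_right h, min_eq_left (by linarith)]
    exact mul_nonneg (by linarith) (by linarith)
  · rw [max_eq_left h]
    rcases le_total l r with h' | h'
    · rw [min_eq_left h']; simp
    · rw [min_eq_right h']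
      exact mul_nonneg_of_nonpos_of_nonpos (by linarith) (by linarith)

lemma sum_vecMulVec_eq {M : ℕ} (v : Fin M → Fin M → ℝ) (c : Fin M → ℝ) :
    ∑ m, c m • vecMulVec (v m) (v m) = (Matrix.of v)ᵀ * diagonal c * Matrix.of v := by
  ext i j
  rw [Matrix.sum_apply, Matrix.mul_apply]
  refine Finset.sum_congr rfl fun m _ => ?_
  simp [Matrix.mul_diagonal, vecMulVec_apply]
  ring

open scoped Matrix.Norms.L2Operator in
lemma specNormR_sum_le {M : ℕ} (v : Fin M → Fin M → ℝ)
    (hortho : ∀ a b : Fin M, v a ⬝ᵥ v b = if a = b then (1 : ℝ) else 0)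
    (c : Fin M → ℝ) {r : ℝ} (hr : 0 ≤ r) (hc : ∀ m, |c m| ≤ r) :
    specNormR (∑ m, c m • vecMulVec (v m) (v m)) ≤ r := by
  have hV : Matrix.of v * star (Matrix.of v) = 1 := by
    ext a b
    rw [Matrix.mul_apply, Matrix.one_apply, ← hortho a b]
    simp [dotProduct, Matrix.star_apply]
  have hU : Matrix.of v ∈ unitary (Matrix (Fin M) (Fin M) ℝ) :=
    ⟨mul_eq_one_comm.mp hV, hV⟩
  have hT : (Matrix.of v)ᵀ = star (Matrix.of v) := by
    ext a b
    simp [Matrix.star_apply]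
  rw [sum_vecMulVec_eq, hT]
  change ‖star (Matrix.of v) * diagonal c * Matrix.of v‖ ≤ r
  rw [CStarRing.norm_mul_mem_unitary _ hU,
    CStarRing.norm_mem_unitary_mul _ (Unitary.star_mem hU), Matrix.l2_opNorm_diagonal]
  exact (pi_norm_le_iff_of_nonneg hr).mpr hc

lemma abs_dotProduct_mulVec_le {M : ℕ} (X : Matrix (Fin M) (Fin M) ℝ) {r : ℝ}
    (hX : specNormR X ≤ r) (u : Fin M → ℝ) (hu : u ⬝ᵥ u = 1) : |u ⬝ᵥ X *ᵥ u| ≤ r := by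
  set w : EuclideanSpace ℝ (Fin M) := WithLp.toLp 2 u with hw
  have hn : ‖w‖ = 1 := by
    have h : ‖w‖ ^ 2 = 1 := by
      rw [EuclideanSpace.real_norm_sq_eq, ← hu]
      simp [hw, dotProduct, sq]
    nlinarith [norm_nonneg w]
  have hin : u ⬝ᵥ X *ᵥ u = inner ℝ w (Matrix.toEuclideanCLM (𝕜 := ℝ) X w) := by
    simp [hw, PiLp.inner_apply, dotProduct, mul_comm]
  rw [hin]
  refine (abs_real_inner_le_norm _ _).trans ?_
  have := (Matrix.toEuclideanCLM (𝕜 := ℝ) X).le_opNorm w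
  rw [hn] at this ⊢
  unfold specNormR at hX
  linarith

lemma trace_sum_vecMulVec_transpose_mul {M : ℕ} (v : Fin M → Fin M → ℝ) (e : Fin M → ℝ)
    (D : Matrix (Fin M) (Fin M) ℝ) :
    ((∑ m, e m • vecMulVec (v m) (v m))ᵀ * D).trace = ∑ m, e m * (v m ⬝ᵥ D *ᵥ v m) := by
  rw [Matrix.transpose_sum, Finset.sum_mul, Matrix.trace_sum]
  refine Finset.sum_congr rfl fun m _ => ?_
  rw [transpose_smul, transpose_vecMulVec, smul_mul, trace_smul, vecMulVec_mul, trace_vecMulVec,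
    dotProduct_mulVec, dotProduct_comm, smul_eq_mul]

lemma dotProduct_sum_mulVec {M : ℕ} (v : Fin M → Fin M → ℝ)
    (hortho : ∀ a b : Fin M, v a ⬝ᵥ v b = if a = b then (1 : ℝ) else 0)
    (c : Fin M → ℝ) (k : Fin M) :
    v k ⬝ᵥ (∑ m, c m • vecMulVec (v m) (v m)) *ᵥ v k = c k := by
  rw [Matrix.sum_mulVec, dotProduct_sum]
  rw [Finset.sum_eq_single k (fun m _ hm => ?_) (by simp)]
  · simp [smul_mulVec, vecMulVec_mulVec, hortho]
  · simp [smul_mulVec, vecMulVec_mulVec, hortho, hm]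

/-- **Spectral clamping is the Frobenius projection onto a spectral-norm ball.**
Let `C ∈ ℝ^{M×M}` be symmetric with spectral decomposition `C = Σₘ λₘ vₘ vₘᵀ` (orthonormal
eigenbasis `{vₘ}`), and let `r > 0`.  Then `Y = Σₘ clamp_r(λₘ) vₘ vₘᵀ` satisfies `‖Y‖ ≤ r`
and `‖Y - C‖_F ≤ ‖X - C‖_F` for every `X` with `‖X‖ ≤ r`, with equality only when
`X = Y`; i.e., `Y` is the unique Frobenius-norm projection of `C` onto
`{X : ‖X‖ ≤ r}`. -/
theorem spectral_clamping_is_projection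
    {M : ℕ} (C : Matrix (Fin M) (Fin M) ℝ) (hC : C = Cᵀ)
    (lam : Fin M → ℝ) (v : Fin M → Fin M → ℝ)
    (hortho : ∀ a b : Fin M, v a ⬝ᵥ v b = if a = b then (1 : ℝ) else 0)
    (hdecomp : C = ∑ m : Fin M, lam m • vecMulVec (v m) (v m))
    (r : ℝ) (hr : 0 < r) :
    specNormR (∑ m : Fin M, clamp r (lam m) • vecMulVec (v m) (v m)) ≤ r ∧
    ∀ X : Matrix (Fin M) (Fin M) ℝ, specNormR X ≤ r →
      frobNorm ((∑ m : Fin M, clamp r (lam m) • vecMulVec (v m) (v m)) - C) ≤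
        frobNorm (X - C) ∧
      (X ≠ ∑ m : Fin M, clamp r (lam m) • vecMulVec (v m) (v m) →
        frobNorm ((∑ m : Fin M, clamp r (lam m) • vecMulVec (v m) (v m)) - C) <
          frobNorm (X - C)) := by
  refine ⟨specNormR_sum_le v hortho _ hr.le fun m => abs_clamp_le hr _, fun X hX => ?_⟩
  set Y := ∑ m : Fin M, clamp r (lam m) • vecMulVec (v m) (v m) with hY
  have hE : Y - C = ∑ m, (clamp r (lam m) - lam m) • vecMulVec (v m) (v m) := by
    rw [hY, hdecomp, ← Finset.sum_sub_distrib]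
    simp only [sub_smul]
  have hcross : 0 ≤ ((Y - C)ᵀ * (X - Y)).trace := by
    rw [hE, trace_sum_vecMulVec_transpose_mul]
    refine Finset.sum_nonneg fun m _ => ?_
    rw [sub_mulVec, dotProduct_sub, hY, dotProduct_sum_mulVec v hortho]
    exact clamp_variational _ _ (abs_dotProduct_mulVec_le X hX _ (by simp [hortho]))
  have hcomm : ((X - Y)ᵀ * (Y - C)).trace = ((Y - C)ᵀ * (X - Y)).trace := by
    rw [← Matrix.trace_transpose, transpose_mul, transpose_transpose]
  have hexp : ((X - C)ᵀ * (X - C)).trace = ((X - Y)ᵀ * (X - Y)).trace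
      + 2 * ((Y - C)ᵀ * (X - Y)).trace + ((Y - C)ᵀ * (Y - C)).trace := by
    rw [show X - C = (X - Y) + (Y - C) by abel, transpose_add, add_mul, mul_add, mul_add]
    simp only [trace_add]
    rw [hcomm]
    ring
  have hpsd : ∀ A : Matrix (Fin M) (Fin M) ℝ, 0 ≤ (Aᵀ * A).trace := fun A => by
    simpa using (Matrix.posSemidef_conjTranspose_mul_self A).trace_nonneg
  have hD := hpsd (X - Y)
  refine ⟨Real.sqrt_le_sqrt (by linarith), fun hne => ?_⟩
  have hpos : 0 < ((X - Y)ᵀ * (X - Y)).trace := by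
    refine lt_of_le_of_ne hD fun h0 => hne (sub_eq_zero.mp ?_)
    exact Matrix.trace_conjTranspose_mul_self_eq_zero_iff.mp (by simpa using h0.symm)
  exact Real.sqrt_lt_sqrt (hpsd _) (by linarith)
end
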